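/- arXiv:2201.12498 — 6 statements merged into one kernel-verified Lean document; each statement's English description precedes it below -/
import Mathlib

section
/- Let δ ∈ [0,1) and let W ∈ ℝ^{n×n} be a symmetric matrix with all entries positive such that W_{sj}/W_{tj} ≤ 1+δ for all indices s, t, j. Let W̄ = D^{−1/2} W D^{−1/2} be its normalized matrix. Then for all indices s, t, j one has W̄_{sj}/W̄_{tj} ≤ (1+δ)^{3/2}; in particular, setting δ' = (1+δ)^{3/2} − 1, all same-column entry ratios of W̄ are at most 1+δ'. -/
open Matrix Finset

/-- The symmetrically normalized matrix `D^{-1/2} W D^{-1/2}` where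
`D = diag(row sums of W)`. -/
noncomputable def normalizedMatrix {n : ℕ} (W : Matrix (Fin n) (Fin n) ℝ) :
    Matrix (Fin n) (Fin n) ℝ :=
  fun i j => W i j / (Real.sqrt (∑ k, W i k) * Real.sqrt (∑ k, W j k))

theorem sum_div_sum_le_of_forall_div_le {ι K : Type*} [Field K] [LinearOrder K]
    [IsStrictOrderedRing K] {s : Finset ι} {f g : ι → K} {C : K} (hC : 0 ≤ C)
    (hg : ∀ i ∈ s, 0 < g i) (hfg : ∀ i ∈ s, f i / g i ≤ C) :
    (∑ i ∈ s, f i) / ∑ i ∈ s, g i ≤ C := by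
  refine div_le_of_le_mul₀ (sum_nonneg fun i hi => (hg i hi).le) hC ?_
  rw [mul_sum]
  exact sum_le_sum fun i hi => (div_le_iff₀ (hg i hi)).1 (hfg i hi)

theorem rpow_three_div_two_eq_mul_sqrt {x : ℝ} (hx : 0 ≤ x) :
    x ^ ((3 : ℝ) / 2) = x * √x := by
  rw [Real.sqrt_eq_rpow, ← Real.rpow_one_add' hx (by norm_num)]
  norm_num

theorem normalizedMatrix_div_normalizedMatrix {n : ℕ} {W : Matrix (Fin n) (Fin n) ℝ} {s t j : Fin n}
    (ht : 0 ≤ ∑ k, W t k) (hj : 0 < ∑ k, W j k) :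
    normalizedMatrix W s j / normalizedMatrix W t j =
      W s j / W t j * √((∑ k, W t k) / ∑ k, W s k) := by
  have hj' : √(∑ k, W j k) ≠ 0 := (Real.sqrt_pos.2 hj).ne'
  rw [Real.sqrt_div ht]
  simp only [normalizedMatrix]
  field_simp

theorem normalized_ratio_bound_general {n : ℕ} {C : ℝ} {W : Matrix (Fin n) (Fin n) ℝ}
    (hpos : ∀ i j, 0 < W i j) {s t : Fin n} (hst : ∀ k, W s k / W t k ≤ C)
    (hts : ∀ k, W t k / W s k ≤ C) (j : Fin n) :
    normalizedMatrix W s j / normalizedMatrix W t j ≤ C ^ ((3 : ℝ) / 2) := by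
  have rowSum_pos (i : Fin n) : 0 < ∑ k, W i k := sum_pos (fun k _ => hpos i k) ⟨j, mem_univ j⟩
  have hC : 0 ≤ C := (div_pos (hpos s j) (hpos t j)).le.trans (hst j)
  have rowSum_div_le : (∑ k, W t k) / ∑ k, W s k ≤ C :=
    sum_div_sum_le_of_forall_div_le hC (fun k _ => hpos s k) fun k _ => hts k
  calc normalizedMatrix W s j / normalizedMatrix W t j
      = W s j / W t j * √((∑ k, W t k) / ∑ k, W s k) :=
        normalizedMatrix_div_normalizedMatrix (rowSum_pos t).le (rowSum_pos j)
    _ ≤ C * √C := by gcongr; exact hst j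
    _ = C ^ ((3 : ℝ) / 2) := (rpow_three_div_two_eq_mul_sqrt hC).symm

/-- paper's Lemma A.1.  If `W` is a symmetric matrix with all entries
positive whose same-column entry ratios are at most `1 + δ` for `δ ∈ [0,1)`, then the
same-column entry ratios of the normalized matrix `W̄ = D^{-1/2} W D^{-1/2}` are at most
`(1 + δ)^{3/2}`. -/
theorem normalized_ratio_bound {n : ℕ} (δ : ℝ) (hδ0 : 0 ≤ δ) (hδ1 : δ < 1)
    (W : Matrix (Fin n) (Fin n) ℝ)
    (hsym : W.IsSymm)
    (hpos : ∀ i j, 0 < W i j)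
    (hratio : ∀ s t j, W s j / W t j ≤ 1 + δ) :
    ∀ s t j, normalizedMatrix W s j / normalizedMatrix W t j ≤ (1 + δ) ^ ((3 : ℝ) / 2) :=
  fun s t => normalized_ratio_bound_general hpos (hratio s t) (hratio t s)
end

section
/- Let δ' ≥ 0 and let A ∈ ℝ^{n×n} be a symmetric matrix with all entries positive such that A_{sj}/A_{tj} ≤ 1+δ' for all indices s, t, j. Let v ∈ ℝⁿ be an entrywise-positive eigenvector of A associated with its largest eigenvalue, normalized so that ‖v‖₂ = 1. Then ‖v‖₁² ≥ n²/(1 + (n−1)(1+δ')²). -/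
open Matrix Finset

/-! If each row of `A` is entrywise at most `r` times every other row, then any two coordinates of
`A *ᵥ v` with `v ≥ 0`, hence of a nonnegative eigenvector with positive eigenvalue, have ratio at
most `r`. Let `m` be the smallest coordinate of such a `v ∈ ℝⁿ`. Then `∑ v i ≥ n m`, while
`∑ v i ^ 2 ≤ m ^ 2 + (n - 1) (r m) ^ 2`, and eliminating `m` gives the bound. -/

theorem mulVec_apply_le_mul_of_row_le {m n R : Type*} [Fintype n] [Semiring R] [PartialOrder R]
    [IsOrderedRing R] {A : Matrix m n R} {v : n → R} {r : R} {s t : m}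
    (hrow : ∀ j, A s j ≤ r * A t j) (hv : ∀ j, 0 ≤ v j) :
    (A *ᵥ v) s ≤ r * (A *ᵥ v) t := by
  simp only [mulVec, dotProduct, mul_sum, ← mul_assoc]
  gcongr with j
  · exact hv j
  · exact hrow j

section OrderedRing

variable {ι R : Type*} [Fintype ι] [CommRing R] [LinearOrder R] [IsStrictOrderedRing R]
  {A : Matrix ι ι R} {v : ι → R} {r lam : R}

theorem eigenvector_apply_le_mul_of_row_le {s t : ι} (hrow : ∀ j, A s j ≤ r * A t j)
    (hv : ∀ j, 0 ≤ v j) (hlam : 0 < lam) (heig : A *ᵥ v = lam • v) : v s ≤ r * v t := by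
  have hle := mulVec_apply_le_mul_of_row_le hrow hv
  simp only [heig, Pi.smul_apply, smul_eq_mul, mul_left_comm r lam] at hle
  exact le_of_mul_le_mul_left hle hlam

theorem eigenvalue_pos_of_diag_pos (hA : ∀ i j, 0 ≤ A i j) (hdiag : ∀ i, 0 < A i i)
    (hv : ∀ i, 0 ≤ v i) (hv0 : v ≠ 0) (heig : A *ᵥ v = lam • v) : 0 < lam := by
  obtain ⟨i, hi⟩ := Function.ne_iff.1 hv0
  have hvi : 0 < v i := (hv i).lt_of_ne' hi
  have hlam_mul : 0 < lam * v i := calc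
    0 < A i i * v i := mul_pos (hdiag i) hvi
    _ ≤ (A *ᵥ v) i :=
      single_le_sum (f := fun j => A i j * v j) (fun j _ => mul_nonneg (hA i j) (hv j))
        (mem_univ i)
    _ = lam * v i := congrFun heig i
  exact pos_of_mul_pos_left hlam_mul hvi.le

variable (ι r) in
theorem one_add_card_sub_one_mul_sq_pos [Nonempty ι] :
    0 < 1 + ((Fintype.card ι : R) - 1) * r ^ 2 := by
  have hcard : (1 : R) ≤ Fintype.card ι := mod_cast Fintype.card_pos (α := ι)
  have hprod := mul_nonneg (sub_nonneg.2 hcard) (sq_nonneg r)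
  linarith

theorem sum_sq_le_of_forall_le_mul (hv : ∀ i, 0 ≤ v i) {t : ι} (hle : ∀ s, v s ≤ r * v t) :
    ∑ i, v i ^ 2 ≤ (1 + ((Fintype.card ι : R) - 1) * r ^ 2) * v t ^ 2 := by
  classical
  calc ∑ i, v i ^ 2 = v t ^ 2 + ∑ i ∈ univ.erase t, v i ^ 2 :=
        (add_sum_erase _ _ (mem_univ t)).symm
    _ ≤ v t ^ 2 + ∑ _i ∈ univ.erase t, (r * v t) ^ 2 := by
        gcongr with i
        · exact hv i
        · exact hle i
    _ = (1 + ((Fintype.card ι : R) - 1) * r ^ 2) * v t ^ 2 := by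
        rw [sum_const, nsmul_eq_mul, cast_card_erase_of_mem (mem_univ t), card_univ]
        ring

theorem card_sq_mul_sum_sq_le_of_forall_le_mul (hv : ∀ i, 0 ≤ v i)
    (hle : ∀ s t, v s ≤ r * v t) :
    (Fintype.card ι : R) ^ 2 * ∑ i, v i ^ 2 ≤
      (1 + ((Fintype.card ι : R) - 1) * r ^ 2) * (∑ i, v i) ^ 2 := by
  cases isEmpty_or_nonempty ι
  · simp
  obtain ⟨t, hmin⟩ := Finite.exists_min v
  have hsum : Fintype.card ι * v t ≤ ∑ i, v i := by
    simpa using card_nsmul_le_sum univ v (v t) fun i _ => hmin i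
  have hD := one_add_card_sub_one_mul_sq_pos ι r
  calc (Fintype.card ι : R) ^ 2 * ∑ i, v i ^ 2
      ≤ (Fintype.card ι : R) ^ 2 * ((1 + ((Fintype.card ι : R) - 1) * r ^ 2) * v t ^ 2) := by
        gcongr
        exact sum_sq_le_of_forall_le_mul hv (hle · t)
    _ = (1 + ((Fintype.card ι : R) - 1) * r ^ 2) * (Fintype.card ι * v t) ^ 2 := by ring
    _ ≤ (1 + ((Fintype.card ι : R) - 1) * r ^ 2) * (∑ i, v i) ^ 2 := by
        have := hv t
        gcongr

end OrderedRing

theorem perron_vector_l1_lower_bound_general {ι K : Type*} [Fintype ι] [Field K] [LinearOrder K]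
    [IsStrictOrderedRing K] {A : Matrix ι ι K} {v : ι → K} {r lam : K}
    (hrow : ∀ s t j, A s j ≤ r * A t j) (hv : ∀ i, 0 ≤ v i) (hnorm : ∑ i, v i ^ 2 = 1)
    (hlam : 0 < lam) (heig : A *ᵥ v = lam • v) :
    (Fintype.card ι : K) ^ 2 / (1 + ((Fintype.card ι : K) - 1) * r ^ 2) ≤ (∑ i, |v i|) ^ 2 := by
  have : Nonempty ι := by
    by_contra! hempty
    simp at hnorm
  have hratio (s t : ι) : v s ≤ r * v t :=
    eigenvector_apply_le_mul_of_row_le (hrow s t) hv hlam heig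
  rw [div_le_iff₀' (one_add_card_sub_one_mul_sq_pos ι r)]
  simpa only [hnorm, mul_one, abs_of_nonneg (hv _)] using
    card_sq_mul_sum_sq_le_of_forall_le_mul hv hratio

/-- paper's Lemma A.3.  Let `A` be a symmetric matrix with all entries
positive whose same-column entry ratios are at most `1 + δ'`, and let `v` be an
entrywise-positive unit (in `ℓ²`) eigenvector of `A` associated with its largest
eigenvalue.  Then `‖v‖₁² ≥ n² / (1 + (n-1)(1+δ')²)`. -/
theorem perron_vector_l1_lower_bound {n : ℕ} (δ' : ℝ) (hδ' : 0 ≤ δ')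
    (A : Matrix (Fin n) (Fin n) ℝ)
    (hsym : A.IsSymm)
    (hpos : ∀ i j, 0 < A i j)
    (hratio : ∀ s t j, A s j / A t j ≤ 1 + δ')
    (v : Fin n → ℝ) (hvpos : ∀ i, 0 < v i)
    (hnorm : ∑ i, (v i) ^ 2 = 1)
    (lam : ℝ) (heig : A.mulVec v = lam • v)
    (hmax : ∀ (μ : ℝ) (w : Fin n → ℝ), w ≠ 0 → A.mulVec w = μ • w → μ ≤ lam) :
    (∑ i, |v i|) ^ 2 ≥ (n : ℝ) ^ 2 / (1 + ((n : ℝ) - 1) * (1 + δ') ^ 2) := by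
  have hv (i : Fin n) : 0 ≤ v i := (hvpos i).le
  have hv0 : v ≠ 0 := by
    rintro rfl
    simp at hnorm
  have hrow (s t j : Fin n) : A s j ≤ (1 + δ') * A t j := (div_le_iff₀ (hpos t j)).1 (hratio s t j)
  have hlam : 0 < lam :=
    eigenvalue_pos_of_diag_pos (fun i j => (hpos i j).le) (fun i => hpos i i) hv hv0 heig
  simpa only [Fintype.card_fin] using
    perron_vector_l1_lower_bound_general hrow hv hnorm hlam heig
end

section
/- Let A ∈ ℝ^{n×n} be a symmetric matrix with all entries positive and let v ∈ ℝⁿ be an entrywise-positive eigenvector of A associated with its largest eigenvalue. Then the ratio of any two entries of v is bounded by the maximal same-column entry ratio of A: max_{i,j} vᵢ/vⱼ ≤ max_{j,s,t} A_{sj}/A_{tj}. -/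
open Matrix Finset

/-! The entries of `v` are proportional to the dot products of the rows of `A` with `v`, so
`vᵢ / vⱼ = (∑ₗ Aᵢₗ vₗ) / (∑ₗ Aⱼₗ vₗ)` is a weighted mediant of the ratios `Aᵢₗ / Aⱼₗ`. -/

theorem dotProduct_pos_of_forall_pos {ι R : Type*} [Fintype ι] [Semiring R] [PartialOrder R]
    [IsStrictOrderedRing R] {u v : ι → R} (hu : ∀ k, 0 < u k) (hv : 0 < v) : 0 < u ⬝ᵥ v := by
  obtain ⟨hv_nonneg, k, hk⟩ := Pi.lt_def.1 hv
  exact sum_pos' (fun l _ ↦ mul_nonneg (hu l).le (hv_nonneg l)) ⟨k, mem_univ k, mul_pos (hu k) hk⟩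

section LinearOrderedField

variable {ι 𝕜 : Type*} [Fintype ι] [Field 𝕜] [LinearOrder 𝕜] [IsStrictOrderedRing 𝕜]

theorem dotProduct_div_dotProduct_le_of_forall_div_le {u w v : ι → 𝕜} {c : 𝕜}
    (hw : ∀ k, 0 < w k) (hv : 0 < v) (hc : ∀ k, u k / w k ≤ c) : u ⬝ᵥ v / w ⬝ᵥ v ≤ c := by
  have hu : u ≤ c • w := fun k ↦ (div_le_iff₀ (hw k)).1 (hc k)
  rw [div_le_iff₀ (dotProduct_pos_of_forall_pos hw hv)]
  calc
    u ⬝ᵥ v ≤ (c • w) ⬝ᵥ v := dotProduct_le_dotProduct_of_nonneg_right hu hv.le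
    _ = c * (w ⬝ᵥ v) := smul_dotProduct c w v

theorem perron_vector_entry_ratio_bound_general {A : Matrix ι ι 𝕜} {v : ι → 𝕜} {lam c : 𝕜}
    {i j : ι} (hpos : ∀ l, 0 < A j l) (hv : 0 < v) (heig : A *ᵥ v = lam • v)
    (hc : ∀ l, A i l / A j l ≤ c) : v i / v j ≤ c := by
  have hrow (k : ι) : A k ⬝ᵥ v = lam * v k := congrFun heig k
  have hlam : lam ≠ 0 := by
    have hj : 0 < lam * v j := hrow j ▸ dotProduct_pos_of_forall_pos hpos hv
    exact left_ne_zero_of_mul hj.ne'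
  calc
    v i / v j = A i ⬝ᵥ v / A j ⬝ᵥ v := by rw [hrow, hrow, mul_div_mul_left _ _ hlam]
    _ ≤ c := dotProduct_div_dotProduct_le_of_forall_div_le hpos hv hc

end LinearOrderedField

/-- key fact used in the paper's Lemmas A.3 and A.8.  Let `A` be a
symmetric matrix with all entries positive and let `v` be an entrywise-positive
eigenvector of `A` associated with its largest eigenvalue.  Then the ratio of any two
entries of `v` is bounded by the maximal same-column entry ratio of `A`:
`max_{i,j} vᵢ/vⱼ ≤ max_{j,s,t} A_{sj}/A_{tj}` (stated as: any upper bound `c` on all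
same-column entry ratios of `A` is an upper bound on all entry ratios of `v`). -/
theorem perron_vector_entry_ratio_bound {n : ℕ}
    (A : Matrix (Fin n) (Fin n) ℝ)
    (hsym : A.IsSymm)
    (hpos : ∀ i j, 0 < A i j)
    (v : Fin n → ℝ) (hvpos : ∀ i, 0 < v i)
    (lam : ℝ) (heig : A.mulVec v = lam • v)
    (hmax : ∀ (μ : ℝ) (w : Fin n → ℝ), w ≠ 0 → A.mulVec w = μ • w → μ ≤ lam) :
    ∀ c : ℝ, (∀ s t j, A s j / A t j ≤ c) → ∀ i j, v i / v j ≤ c := by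
  intro c hc i j
  have hv : 0 < v := Pi.lt_def.2 ⟨fun k ↦ (hvpos k).le, i, hvpos i⟩
  exact perron_vector_entry_ratio_bound_general (hpos j) hv heig (hc i j)
end

section
/- Let δ' ≥ 0 and let A ∈ ℝ^{n×n} be a symmetric matrix with all entries positive whose largest eigenvalue equals 1 and such that A_{sj}/A_{tj} ≤ 1+δ' for all indices s, t, j. Then the sum of the squares of all eigenvalues of A (equivalently, the squared Frobenius norm ‖A‖_F²) satisfies Σᵢ λᵢ² ≤ (1 + (n−1)(1+δ')²)(1+δ')² / n. -/
open Matrix Finset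

/-!
Two entries of a symmetric `N × N` matrix in arbitrary positions are compared by changing the row
index twice, so column ratios at most `r` make all entry ratios at most `r ^ 2`. The
Cauchy–Schwarz inequality between the sum of the `N ^ 2` entries and the sum of their squares then
reverses up to the factor `r ^ 2`. The Rayleigh quotient of the all-ones vector bounds the sum of
the entries by `N`, hence the squared Frobenius norm is at most `r ^ 2`. The stated bound is this
one multiplied by the average of `1` and `N - 1` copies of `r ^ 2 ≥ 1`.
-/

theorem card_mul_sum_sq_le_mul_sq_sum {ι K : Type*} [CommSemiring K] [PartialOrder K]
    [IsOrderedRing K] {s : Finset ι} {f : ι → K} {c : K} (f_nonneg : ∀ i ∈ s, 0 ≤ f i)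
    (f_le : ∀ i ∈ s, ∀ j ∈ s, f i ≤ c * f j) :
    #s * ∑ i ∈ s, f i ^ 2 ≤ c * (∑ i ∈ s, f i) ^ 2 :=
  calc #s * ∑ i ∈ s, f i ^ 2 = ∑ i ∈ s, ∑ _j ∈ s, f i * f i := by
        simp only [sum_const, nsmul_eq_mul, mul_sum, sq]
    _ ≤ ∑ i ∈ s, ∑ j ∈ s, f i * (c * f j) :=
        sum_le_sum fun i hi ↦ sum_le_sum fun j hj ↦
          mul_le_mul_of_nonneg_left (f_le i hi j hj) (f_nonneg i hi)
    _ = c * (∑ i ∈ s, f i) ^ 2 := by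
        rw [← sum_mul_sum, ← mul_sum]
        ring

section Diagonalization

variable {m n K : Type*} [Fintype n] [DecidableEq n]

theorem isSymm_mul_diagonal_mul_transpose [CommSemiring K] (U : Matrix m n K) (d : n → K) :
    (U * diagonal d * Uᵀ).IsSymm := by
  simp only [IsSymm, transpose_mul, transpose_transpose, diagonal_transpose, Matrix.mul_assoc]

variable [Fintype m]

theorem sum_sq_mul_diagonal_mul_transpose [CommSemiring K] {U : Matrix m n K} (hU : Uᵀ * U = 1)
    (d : n → K) :
    ∑ i, ∑ j, (U * diagonal d * Uᵀ) i j ^ 2 = ∑ k, d k ^ 2 := by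
  set A := U * diagonal d * Uᵀ with hA
  have A_symm : Aᵀ = A := isSymm_mul_diagonal_mul_transpose U d
  calc ∑ i, ∑ j, A i j ^ 2 = trace (A * Aᵀ) := by
        simp only [trace, diag_apply, mul_apply, transpose_apply, sq]
    _ = trace (U * (diagonal d * (Uᵀ * U) * diagonal d * Uᵀ)) := by
        rw [A_symm]
        simp only [hA, Matrix.mul_assoc]
    _ = trace (diagonal d * diagonal d) := by
        rw [hU, Matrix.mul_one, trace_mul_comm, Matrix.mul_assoc, hU, Matrix.mul_one]
    _ = ∑ k, d k ^ 2 := by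
        simp only [diagonal_mul_diagonal, trace_diagonal, sq]

theorem dotProduct_mul_diagonal_mul_transpose_mulVec [CommSemiring K] (U : Matrix m n K)
    (d : n → K) (x : m → K) :
    x ⬝ᵥ (U * diagonal d * Uᵀ) *ᵥ x = ∑ k, d k * (Uᵀ *ᵥ x) k ^ 2 := by
  rw [← mulVec_mulVec, ← mulVec_mulVec, dotProduct_mulVec, ← mulVec_transpose]
  simp only [dotProduct, mulVec_diagonal]
  exact sum_congr rfl fun k _ ↦ by ring

theorem dotProduct_mul_diagonal_mul_transpose_mulVec_le [DecidableEq m] [CommRing K]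
    [LinearOrder K] [IsStrictOrderedRing K] {U : Matrix m n K} (hU : U * Uᵀ = 1) {d : n → K}
    {b : K} (d_le : ∀ k, d k ≤ b) (x : m → K) :
    x ⬝ᵥ (U * diagonal d * Uᵀ) *ᵥ x ≤ b * (x ⬝ᵥ x) := by
  have norm_sq_eq : x ⬝ᵥ x = ∑ k, (Uᵀ *ᵥ x) k ^ 2 := by
    simpa [hU] using dotProduct_mul_diagonal_mul_transpose_mulVec U 1 x
  rw [dotProduct_mul_diagonal_mul_transpose_mulVec, norm_sq_eq, mul_sum]
  exact sum_le_sum fun k _ ↦ mul_le_mul_of_nonneg_right (d_le k) (sq_nonneg _)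

theorem sum_mul_diagonal_mul_transpose_le [DecidableEq m] [CommRing K] [LinearOrder K]
    [IsStrictOrderedRing K] {U : Matrix m n K} (hU : U * Uᵀ = 1) {d : n → K} {b : K}
    (d_le : ∀ k, d k ≤ b) :
    ∑ i, ∑ j, (U * diagonal d * Uᵀ) i j ≤ b * Fintype.card m := by
  simpa [dotProduct, mulVec] using dotProduct_mul_diagonal_mul_transpose_mulVec_le hU d_le 1

end Diagonalization

section EntryRatio

variable {ι K : Type*} {A : Matrix ι ι K} {r : K}

theorem apply_le_sq_mul_apply_of_isSymm [CommSemiring K] [PartialOrder K] [IsOrderedRing K]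
    (A_symm : A.IsSymm) (r_nonneg : 0 ≤ r) (ratio_le : ∀ s t j, A s j ≤ r * A t j)
    (i j k l : ι) : A i j ≤ r ^ 2 * A k l :=
  calc A i j ≤ r * A l j := ratio_le i l j
    _ = r * A j l := by rw [A_symm.apply]
    _ ≤ r * (r * A k l) := mul_le_mul_of_nonneg_left (ratio_le j k l) r_nonneg
    _ = r ^ 2 * A k l := by ring

theorem card_sq_mul_sum_sq_le_of_isSymm [Fintype ι] [CommSemiring K] [PartialOrder K]
    [IsOrderedRing K] (A_symm : A.IsSymm) (A_nonneg : ∀ i j, 0 ≤ A i j) (r_nonneg : 0 ≤ r)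
    (ratio_le : ∀ s t j, A s j ≤ r * A t j) :
    (Fintype.card ι : K) ^ 2 * ∑ i, ∑ j, A i j ^ 2 ≤ r ^ 2 * (∑ i, ∑ j, A i j) ^ 2 := by
  have reverse_cauchy_schwarz := card_mul_sum_sq_le_mul_sq_sum (s := (univ : Finset (ι × ι)))
    (f := fun p ↦ A p.1 p.2) (fun p _ ↦ A_nonneg p.1 p.2) fun p _ q _ ↦
      apply_le_sq_mul_apply_of_isSymm A_symm r_nonneg ratio_le p.1 p.2 q.1 q.2
  simpa only [card_univ, Fintype.card_prod, Nat.cast_mul, ← sq (Fintype.card ι : K),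
    Fintype.sum_prod_type]
    using reverse_cauchy_schwarz

end EntryRatio

theorem sum_sq_eigenvalues_bound_general {ι K : Type*} [Fintype ι] [DecidableEq ι] [CommRing K]
    [LinearOrder K] [IsStrictOrderedRing K] {A U : Matrix ι ι K} {μ : ι → K} {r : K}
    (r_nonneg : 0 ≤ r) (A_nonneg : ∀ i j, 0 ≤ A i j) (ratio_le : ∀ s t j, A s j ≤ r * A t j)
    (hU : U * Uᵀ = 1) (hdecomp : A = U * diagonal μ * Uᵀ) (μ_le_one : ∀ i, μ i ≤ 1) :
    ∑ i, μ i ^ 2 ≤ r ^ 2 := by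
  cases isEmpty_or_nonempty ι
  · simpa using sq_nonneg r
  have A_symm : A.IsSymm := hdecomp ▸ isSymm_mul_diagonal_mul_transpose U μ
  have frobenius_sq : ∑ i, ∑ j, A i j ^ 2 = ∑ i, μ i ^ 2 :=
    hdecomp ▸ sum_sq_mul_diagonal_mul_transpose (mul_eq_one_comm.mp hU) μ
  have entries_sum_nonneg : 0 ≤ ∑ i, ∑ j, A i j :=
    sum_nonneg fun i _ ↦ sum_nonneg fun j _ ↦ A_nonneg i j
  have entries_sum_le : ∑ i, ∑ j, A i j ≤ Fintype.card ι := by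
    simpa only [← hdecomp, one_mul] using sum_mul_diagonal_mul_transpose_le hU μ_le_one
  have card_sq_pos : (0 : K) < (Fintype.card ι : K) ^ 2 := by
    have := Fintype.card_pos (α := ι)
    positivity
  refine le_of_mul_le_mul_left ?_ card_sq_pos
  calc (Fintype.card ι : K) ^ 2 * ∑ i, μ i ^ 2
      = (Fintype.card ι : K) ^ 2 * ∑ i, ∑ j, A i j ^ 2 := by rw [frobenius_sq]
    _ ≤ r ^ 2 * (∑ i, ∑ j, A i j) ^ 2 :=
        card_sq_mul_sum_sq_le_of_isSymm A_symm A_nonneg r_nonneg ratio_le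
    _ ≤ r ^ 2 * (Fintype.card ι : K) ^ 2 := by gcongr
    _ = (Fintype.card ι : K) ^ 2 * r ^ 2 := mul_comm _ _

/-- paper's Lemma A.4.  Let `A` be a symmetric matrix with all entries
positive, largest eigenvalue equal to `1`, and same-column entry ratios at most `1 + δ'`.
Then the sum of the squares of all eigenvalues of `A` (listed in decreasing order with
multiplicity via a spectral decomposition) is at most
`(1 + (n-1)(1+δ')²)(1+δ')² / n`. -/
theorem sum_sq_eigenvalues_bound {n : ℕ} (hn : 0 < n) (δ' : ℝ) (hδ' : 0 ≤ δ')
    (A : Matrix (Fin n) (Fin n) ℝ)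
    (hsym : A.IsSymm)
    (hpos : ∀ i j, 0 < A i j)
    (hratio : ∀ s t j, A s j / A t j ≤ 1 + δ')
    (μ : Fin n → ℝ) (hmono : Antitone μ)
    (U : Matrix (Fin n) (Fin n) ℝ) (hU : U * Uᵀ = 1)
    (hdecomp : A = U * Matrix.diagonal μ * Uᵀ)
    (htop : μ ⟨0, hn⟩ = 1) :
    ∑ i, (μ i) ^ 2 ≤ (1 + ((n : ℝ) - 1) * (1 + δ') ^ 2) * (1 + δ') ^ 2 / n := by
  have ratio_le (s t j) : A s j ≤ (1 + δ') * A t j := (div_le_iff₀ (hpos t j)).mp (hratio s t j)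
  have μ_le_one (k) : μ k ≤ 1 := htop ▸ hmono (Nat.zero_le k)
  have one_le_n : (1 : ℝ) ≤ n := mod_cast hn
  have one_le_sq : 1 ≤ (1 + δ') ^ 2 := one_le_pow₀ (by linarith)
  calc ∑ i, (μ i) ^ 2 ≤ (1 + δ') ^ 2 :=
        sum_sq_eigenvalues_bound_general (by linarith) (fun i j ↦ (hpos i j).le) ratio_le hU
          hdecomp μ_le_one
    _ ≤ (1 + ((n : ℝ) - 1) * (1 + δ') ^ 2) * (1 + δ') ^ 2 / n := by
        rw [le_div_iff₀ (by linarith), mul_comm]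
        gcongr
        linarith [le_mul_of_one_le_right (sub_nonneg.mpr one_le_n) one_le_sq]
end

section
/- There is an absolute constant C > 0 with the following property. Let K̄ ≥ 1 divide n, let δ, ξ ∈ [0,1), and let W ∈ ℝ^{n×n} be a symmetric matrix partitioned into K̄ × K̄ blocks according to K̄ groups of indices each of size n/K̄, such that every entry of W inside a diagonal block lies in [1/(1+δ), 1+δ] and every entry outside the diagonal blocks is nonnegative and at most ξ times every entry inside the diagonal blocks. Let Ã be the normalized matrix of W, and let Ā be the normalized matrix of the matrix obtained from W by setting all entries outside the diagonal blocks to zero. Then ‖Ã − Ā‖_F ≤ C · K̄^{5/2} (1+δ)² ξ. -/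
open Matrix Finset

/-- Squared Frobenius norm of a real matrix. -/
def frobSq {m k : ℕ} (A : Matrix (Fin m) (Fin k) ℝ) : ℝ :=
  ∑ i, ∑ j, (A i j) ^ 2

/-!
Write `d` and `b` for the row sums of `W` and of its block-diagonal part, and suppose that every
group contains at least a fraction `1 / r` of the indices. An off-block entry, being at most `ξ`
times every in-block entry, is at most `ξ` times the *average* in-block entry of either row it
meets. Hence `b ≤ d ≤ (1 + (r - 1) ξ) b`, so normalizing by `d` instead of `b` changes an in-block
entry by a relative error of at most `(r - 1) ξ`, while an off-block entry of the normalized matrix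
squares to at most `ξ²` over the product of the two group sizes. Summing the squares row by row
gives `‖Ã - Ā‖_F ≤ r √(r - 1) (β / α) ξ` when the in-block entries lie in `[α, β]`.
-/

lemma abs_div_sub_div_le_mul_div {w p q c : ℝ} (hw : 0 ≤ w) (hc : 0 ≤ c) (hp : 0 < p)
    (hpq : p ≤ q) (hq : q ≤ (1 + c) * p) : |w / q - w / p| ≤ c * (w / p) := by
  have hq_pos : 0 < q := hp.trans_le hpq
  have hanti : w / q ≤ w / p := div_le_div_of_nonneg_left hw hp hpq
  have hmul : w / p ≤ (1 + c) * (w / q) := by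
    rw [mul_div_assoc', div_le_div_iff₀ hp hq_pos]
    linarith [mul_le_mul_of_nonneg_left hq hw]
  rw [abs_sub_comm, abs_of_nonneg (sub_nonneg.2 hanti)]
  linarith [mul_le_mul_of_nonneg_left hanti hc]

lemma mul_sqrt_sub_one_le_rpow {x : ℝ} (hx : 1 ≤ x) : x * √(x - 1) ≤ x ^ ((5 : ℝ) / 2) := by
  have hx_pos : 0 < x := one_pos.trans_le hx
  calc x * √(x - 1) ≤ x ^ 2 * √x := by
        gcongr
        · exact le_self_pow₀ hx two_ne_zero
        · linarith
    _ = x ^ ((5 : ℝ) / 2) := by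
        rw [Real.sqrt_eq_rpow, ← Real.rpow_natCast, ← Real.rpow_add hx_pos]
        norm_num

section NormalizedMatrix

variable {n : ℕ} {A B : Matrix (Fin n) (Fin n) ℝ} {i j : Fin n}

lemma normalizedMatrix_apply_le_div {β s : ℝ} (hβ : 0 ≤ β) (hs : 0 < s) (hij : A i j ≤ β)
    (hi : s ≤ ∑ k, A i k) (hj : s ≤ ∑ k, A j k) : normalizedMatrix A i j ≤ β / s := by
  have hden : s ≤ √(∑ k, A i k) * √(∑ k, A j k) :=
    calc s = √s * √s := (Real.mul_self_sqrt hs.le).symm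
      _ ≤ √(∑ k, A i k) * √(∑ k, A j k) := by gcongr
  exact div_le_div₀ hβ hij hs hden

lemma sq_normalizedMatrix_apply_le {p q ξ : ℝ} (hp : 0 < p) (hq : 0 < q) (hij : 0 ≤ A i j)
    (hi_pos : 0 < ∑ k, A i k) (hj_pos : 0 < ∑ k, A j k)
    (hi : p * A i j ≤ ξ * ∑ k, A i k) (hj : q * A i j ≤ ξ * ∑ k, A j k) :
    normalizedMatrix A i j ^ 2 ≤ ξ ^ 2 / (p * q) := by
  have hprod : p * A i j * (q * A i j) ≤ ξ * (∑ k, A i k) * (ξ * ∑ k, A j k) :=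
    mul_le_mul hi hj (by positivity) (le_trans (by positivity) hi)
  rw [normalizedMatrix, div_pow, mul_pow, Real.sq_sqrt hi_pos.le, Real.sq_sqrt hj_pos.le,
    div_le_div_iff₀ (by positivity) (by positivity)]
  linarith

lemma abs_normalizedMatrix_sub_le_mul {c : ℝ} (hc : 0 ≤ c) (hAB : A i j = B i j)
    (hB : 0 ≤ B i j) (hpos : ∀ l, 0 < ∑ k, B l k) (hle : ∀ l, ∑ k, B l k ≤ ∑ k, A l k)
    (hle_mul : ∀ l, ∑ k, A l k ≤ (1 + c) * ∑ k, B l k) :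
    |normalizedMatrix A i j - normalizedMatrix B i j| ≤ c * normalizedMatrix B i j := by
  have hsqrt_le (l) : √(∑ k, B l k) ≤ √(∑ k, A l k) := Real.sqrt_le_sqrt (hle l)
  have hsqrt_le_mul (l) : √(∑ k, A l k) ≤ √(1 + c) * √(∑ k, B l k) := by
    rw [← Real.sqrt_mul (by positivity)]
    exact Real.sqrt_le_sqrt (hle_mul l)
  have hden_le : √(∑ k, B i k) * √(∑ k, B j k) ≤ √(∑ k, A i k) * √(∑ k, A j k) := by
    gcongr ?_ * ?_ <;> exact hsqrt_le _
  have hden_le_mul : √(∑ k, A i k) * √(∑ k, A j k) ≤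
      (1 + c) * (√(∑ k, B i k) * √(∑ k, B j k)) :=
    calc √(∑ k, A i k) * √(∑ k, A j k)
      _ ≤ √(1 + c) * √(∑ k, B i k) * (√(1 + c) * √(∑ k, B j k)) := by
        gcongr <;> exact hsqrt_le_mul _
      _ = (1 + c) * (√(∑ k, B i k) * √(∑ k, B j k)) := by
        rw [mul_mul_mul_comm, Real.mul_self_sqrt (by positivity)]
  rw [normalizedMatrix, normalizedMatrix, hAB]
  exact abs_div_sub_div_le_mul_div hB hc
    (mul_pos (Real.sqrt_pos.2 (hpos i)) (Real.sqrt_pos.2 (hpos j))) hden_le hden_le_mul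

end NormalizedMatrix

section Blocks

variable {ι κ : Type*} [DecidableEq κ]

/-- The block-diagonal part of `W` for the grouping of the indices by their label `g`: entries
whose row and column carry different labels are replaced by zero. -/
def blockPart {R : Type*} [Zero R] (g : ι → κ) (W : Matrix ι ι R) : Matrix ι ι R :=
  Matrix.of fun i j => if g i = g j then W i j else 0

lemma blockPart_apply_of_eq {R : Type*} [Zero R] {g : ι → κ} {i j : ι} (W : Matrix ι ι R)
    (h : g i = g j) : blockPart g W i j = W i j :=
  if_pos h

lemma blockPart_apply_of_ne {R : Type*} [Zero R] {g : ι → κ} {i j : ι} (W : Matrix ι ι R)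
    (h : g i ≠ g j) : blockPart g W i j = 0 :=
  if_neg h

variable [Fintype ι]

/-- The group of the index `i`: all indices carrying the same label under `g`. -/
def groupOf (g : ι → κ) (i : ι) : Finset ι := {j | g j = g i}

lemma mem_groupOf {g : ι → κ} {i j : ι} : j ∈ groupOf g i ↔ g j = g i :=
  mem_filter_univ j

lemma card_groupOf_pos (g : ι → κ) (i : ι) : 0 < #(groupOf g i) :=
  card_pos.2 ⟨i, mem_groupOf.2 rfl⟩

lemma card_compl_groupOf [DecidableEq ι] (g : ι → κ) (i : ι) :
    (#(groupOf g i)ᶜ : ℝ) = Fintype.card ι - #(groupOf g i) := by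
  rw [card_compl, Nat.cast_sub (card_le_univ _)]

variable {g : ι → κ} {W : Matrix ι ι ℝ} {i : ι} {r ξ : ℝ}

lemma inv_card_groupOf_le (hsize : Fintype.card ι ≤ r * #(groupOf g i)) :
    (#(groupOf g i) : ℝ)⁻¹ ≤ r / Fintype.card ι := by
  have hm : (0 : ℝ) < #(groupOf g i) := mod_cast card_groupOf_pos g i
  have hn : (0 : ℝ) < Fintype.card ι := mod_cast Fintype.card_pos_iff.2 ⟨i⟩
  rwa [inv_eq_one_div, div_le_div_iff₀ hm hn, one_mul]

lemma card_sub_card_groupOf_mul_le (hsize : Fintype.card ι ≤ r * #(groupOf g i)) :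
    (Fintype.card ι - #(groupOf g i)) * (r / Fintype.card ι) ≤ r - 1 := by
  have hn : (0 : ℝ) < Fintype.card ι := mod_cast Fintype.card_pos_iff.2 ⟨i⟩
  rw [mul_div_assoc', div_le_iff₀ hn]
  linarith

lemma sum_blockPart_row {R : Type*} [AddCommMonoid R] (g : ι → κ) (W : Matrix ι ι R) (i : ι) :
    ∑ k, blockPart g W i k = ∑ k ∈ groupOf g i, W i k := by
  simp only [blockPart, groupOf, of_apply, sum_filter, eq_comm]

lemma card_mul_le_mul_sum_blockPart {w : ℝ} (hw : ∀ k, g i = g k → w ≤ ξ * W i k) :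
    #(groupOf g i) * w ≤ ξ * ∑ k, blockPart g W i k := by
  rw [sum_blockPart_row, mul_sum, ← nsmul_eq_mul]
  exact card_nsmul_le_sum _ _ _ fun k hk => hw k (mem_groupOf.1 hk).symm

lemma sum_blockPart_le_sum_of_nonneg (hoff : ∀ k, g i ≠ g k → 0 ≤ W i k) :
    ∑ k, blockPart g W i k ≤ ∑ k, W i k := by
  rw [sum_blockPart_row]
  refine sum_le_sum_of_subset_of_nonneg (subset_univ _) fun k _ hk => hoff k fun h => ?_
  exact hk (mem_groupOf.2 h.symm)

lemma sum_le_mul_sum_blockPart (hξ : 0 ≤ ξ) (hsize : Fintype.card ι ≤ r * #(groupOf g i))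
    (hblock : 0 ≤ ∑ k, blockPart g W i k)
    (hoff : ∀ j, g i ≠ g j → ∀ k, g i = g k → W i j ≤ ξ * W i k) :
    ∑ k, W i k ≤ (1 + (r - 1) * ξ) * ∑ k, blockPart g W i k := by
  classical
  set b := ∑ k, blockPart g W i k with hb
  have hm : (0 : ℝ) < #(groupOf g i) := mod_cast card_groupOf_pos g i
  have hoff_entry : ∀ j ∈ (groupOf g i)ᶜ, W i j ≤ ξ * b / #(groupOf g i) := by
    intro j hj
    rw [le_div_iff₀' hm]
    refine card_mul_le_mul_sum_blockPart (hoff j fun h => ?_)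
    exact mem_compl.1 hj (mem_groupOf.2 h.symm)
  have hoff_sum : ∑ j ∈ (groupOf g i)ᶜ, W i j ≤ (r - 1) * ξ * b :=
    calc ∑ j ∈ (groupOf g i)ᶜ, W i j
      _ ≤ (Fintype.card ι - #(groupOf g i)) * (ξ * b / #(groupOf g i)) := by
        rw [← card_compl_groupOf, ← nsmul_eq_mul]
        exact sum_le_card_nsmul _ _ _ hoff_entry
      _ ≤ ((r - 1) * #(groupOf g i)) * (ξ * b / #(groupOf g i)) := by
        gcongr
        linarith
      _ = (r - 1) * ξ * b := by field_simp
  rw [← sum_add_sum_compl (groupOf g i), ← sum_blockPart_row, ← hb]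
  linarith

lemma sum_le_card_groupOf_mul_add {f : ι → ℝ} {x y : ℝ} (hin : ∀ j, g i = g j → f j ≤ x)
    (hoff : ∀ j, g i ≠ g j → f j ≤ y) :
    ∑ j, f j ≤ #(groupOf g i) * x + (Fintype.card ι - #(groupOf g i)) * y := by
  classical
  rw [← sum_add_sum_compl (groupOf g i), ← card_compl_groupOf, ← nsmul_eq_mul, ← nsmul_eq_mul]
  refine add_le_add (sum_le_card_nsmul _ _ _ fun j hj => hin j (mem_groupOf.1 hj).symm)
    (sum_le_card_nsmul _ _ _ fun j hj => hoff j fun h => ?_)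
  exact mem_compl.1 hj (mem_groupOf.2 h.symm)

end Blocks

/-- The distinguishable sub-class assumption for the grouping of the indices by `g`: entries
inside the diagonal blocks lie in `[α, β]`, entries outside are nonnegative and at most `ξ` times
every entry inside. -/
structure HasDistinguishableBlocks {ι κ : Type*} (g : ι → κ) (W : Matrix ι ι ℝ) (α β ξ : ℝ) :
    Prop where
  le_apply : ∀ i j, g i = g j → α ≤ W i j
  apply_le : ∀ i j, g i = g j → W i j ≤ β
  apply_nonneg_of_ne : ∀ i j, g i ≠ g j → 0 ≤ W i j
  apply_le_mul_of_ne : ∀ i j, g i ≠ g j → ∀ s t, g s = g t → W i j ≤ ξ * W s t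

namespace HasDistinguishableBlocks

section RowSums

variable {ι κ : Type*} [Fintype ι] [DecidableEq κ] {g : ι → κ} {W : Matrix ι ι ℝ} {α β ξ : ℝ}

lemma card_mul_le_sum_blockPart (h : HasDistinguishableBlocks g W α β ξ) (i : ι) :
    #(groupOf g i) * α ≤ ∑ k, blockPart g W i k := by
  simpa only [one_mul] using card_mul_le_mul_sum_blockPart (ξ := 1)
    fun k hk => (h.le_apply i k hk).trans_eq (one_mul _).symm

lemma sum_blockPart_pos (h : HasDistinguishableBlocks g W α β ξ) (hα : 0 < α) (i : ι) :
    0 < ∑ k, blockPart g W i k :=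
  (mul_pos (mod_cast card_groupOf_pos g i) hα).trans_le (h.card_mul_le_sum_blockPart i)

lemma sum_blockPart_le_sum (h : HasDistinguishableBlocks g W α β ξ) (i : ι) :
    ∑ k, blockPart g W i k ≤ ∑ k, W i k :=
  sum_blockPart_le_sum_of_nonneg (h.apply_nonneg_of_ne i)

end RowSums

variable {n : ℕ} {κ : Type*} [DecidableEq κ] {g : Fin n → κ} {W : Matrix (Fin n) (Fin n) ℝ}
  {α β ξ r : ℝ} {i j : Fin n}

lemma normalizedMatrix_blockPart_le (h : HasDistinguishableBlocks g W α β ξ) (hα : 0 < α)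
    (hij : g i = g j) : normalizedMatrix (blockPart g W) i j ≤ β / α / #(groupOf g i) := by
  have hm : (0 : ℝ) < #(groupOf g i) := mod_cast card_groupOf_pos g i
  have hWij : blockPart g W i j ≤ β := (blockPart_apply_of_eq W hij).trans_le (h.apply_le i j hij)
  have hβ : 0 ≤ β := hα.le.trans ((h.le_apply i j hij).trans (h.apply_le i j hij))
  have hgroup : groupOf g i = groupOf g j := by rw [groupOf, groupOf, hij]
  rw [div_div, mul_comm α]
  refine normalizedMatrix_apply_le_div hβ (mul_pos hm hα) hWij (h.card_mul_le_sum_blockPart i) ?_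
  exact hgroup ▸ h.card_mul_le_sum_blockPart j

lemma sq_normalizedMatrix_sub_le_of_eq (h : HasDistinguishableBlocks g W α β ξ) (hα : 0 < α)
    (hξ : 0 ≤ ξ) (hr : 1 ≤ r) (hsize : ∀ i, n ≤ r * #(groupOf g i)) (hij : g i = g j) :
    (normalizedMatrix W i j - normalizedMatrix (blockPart g W) i j) ^ 2 ≤
      ((r - 1) * ξ * (β / α) / #(groupOf g i)) ^ 2 := by
  have hc : 0 ≤ (r - 1) * ξ := mul_nonneg (sub_nonneg.2 hr) hξ
  have hrow (l) : ∑ k, W l k ≤ (1 + (r - 1) * ξ) * ∑ k, blockPart g W l k :=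
    sum_le_mul_sum_blockPart hξ (by simpa only [Fintype.card_fin] using hsize l)
      (h.sum_blockPart_pos hα l).le fun j hj => h.apply_le_mul_of_ne l j hj l
  have hVW : blockPart g W i j = W i j := blockPart_apply_of_eq W hij
  have hV : 0 ≤ blockPart g W i j := hVW ▸ hα.le.trans (h.le_apply i j hij)
  rw [← sq_abs]
  refine pow_le_pow_left₀ (abs_nonneg _) ?_ 2
  calc |normalizedMatrix W i j - normalizedMatrix (blockPart g W) i j|
    _ ≤ (r - 1) * ξ * normalizedMatrix (blockPart g W) i j :=
      abs_normalizedMatrix_sub_le_mul hc hVW.symm hV (h.sum_blockPart_pos hα)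
        h.sum_blockPart_le_sum hrow
    _ ≤ (r - 1) * ξ * (β / α / #(groupOf g i)) :=
      mul_le_mul_of_nonneg_left (h.normalizedMatrix_blockPart_le hα hij) hc
    _ = (r - 1) * ξ * (β / α) / #(groupOf g i) := (mul_div_assoc _ _ _).symm

lemma sq_normalizedMatrix_sub_le_of_ne (h : HasDistinguishableBlocks g W α β ξ) (hα : 0 < α)
    (hξ : 0 ≤ ξ) (hij : g i ≠ g j) :
    (normalizedMatrix W i j - normalizedMatrix (blockPart g W) i j) ^ 2 ≤
      ξ ^ 2 / (#(groupOf g i) * #(groupOf g j)) := by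
  have hV : normalizedMatrix (blockPart g W) i j = 0 := by
    rw [normalizedMatrix, blockPart_apply_of_ne W hij, zero_div]
  have hpos (l) : 0 < ∑ k, W l k := (h.sum_blockPart_pos hα l).trans_le (h.sum_blockPart_le_sum l)
  have hentry (l) : #(groupOf g l) * W i j ≤ ξ * ∑ k, W l k :=
    (card_mul_le_mul_sum_blockPart (h.apply_le_mul_of_ne i j hij l)).trans
      (mul_le_mul_of_nonneg_left (h.sum_blockPart_le_sum l) hξ)
  rw [hV, sub_zero]
  exact sq_normalizedMatrix_apply_le (mod_cast card_groupOf_pos g i)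
    (mod_cast card_groupOf_pos g j) (h.apply_nonneg_of_ne i j hij) (hpos i) (hpos j)
    (hentry i) (hentry j)

lemma sum_sq_normalizedMatrix_sub_le (h : HasDistinguishableBlocks g W α β ξ) (hα : 0 < α)
    (hξ : 0 ≤ ξ) (hr : 1 ≤ r) (hsize : ∀ i, n ≤ r * #(groupOf g i)) (i : Fin n) :
    ∑ j, (normalizedMatrix W i j - normalizedMatrix (blockPart g W) i j) ^ 2 ≤
      r ^ 2 * (r - 1) * (β / α * ξ) ^ 2 / n := by
  have hm : (0 : ℝ) < #(groupOf g i) := mod_cast card_groupOf_pos g i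
  have hr' : 0 ≤ r - 1 := sub_nonneg.2 hr
  have hratio : 1 ≤ β / α :=
    (one_le_div hα).2 ((h.le_apply i i rfl).trans (h.apply_le i i rfl))
  have hcard (l) : Fintype.card (Fin n) ≤ r * #(groupOf g l) :=
    (congrArg _ (Fintype.card_fin n)).trans_le (hsize l)
  have hinv (l) := inv_card_groupOf_le (hcard l)
  have hoff_count := card_sub_card_groupOf_mul_le (hcard i)
  have hoff (j) (hij : g i ≠ g j) :
      (normalizedMatrix W i j - normalizedMatrix (blockPart g W) i j) ^ 2 ≤
        ξ ^ 2 * (#(groupOf g i) : ℝ)⁻¹ * (r / Fintype.card (Fin n)) :=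
    calc _ ≤ ξ ^ 2 / (#(groupOf g i) * #(groupOf g j)) :=
          h.sq_normalizedMatrix_sub_le_of_ne hα hξ hij
      _ = ξ ^ 2 * (#(groupOf g i) : ℝ)⁻¹ * (#(groupOf g j) : ℝ)⁻¹ := by
          rw [div_eq_mul_inv, mul_inv, mul_assoc]
      _ ≤ _ := mul_le_mul_of_nonneg_left (hinv j) (by positivity)
  have hrow := sum_le_card_groupOf_mul_add
    (fun j hij => h.sq_normalizedMatrix_sub_le_of_eq hα hξ hr hsize (j := j) hij) hoff
  rw [Fintype.card_fin] at hinv hoff_count hrow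
  calc ∑ j, (normalizedMatrix W i j - normalizedMatrix (blockPart g W) i j) ^ 2
    _ ≤ #(groupOf g i) * ((r - 1) * ξ * (β / α) / #(groupOf g i)) ^ 2 +
        (n - #(groupOf g i)) * (ξ ^ 2 * (#(groupOf g i) : ℝ)⁻¹ * (r / n)) := hrow
    _ = ((r - 1) ^ 2 * (β / α) ^ 2 + (n - #(groupOf g i)) * (r / n)) * ξ ^ 2 *
        (#(groupOf g i) : ℝ)⁻¹ := by
      field_simp
    _ ≤ ((r - 1) ^ 2 * (β / α) ^ 2 + (r - 1) * (β / α) ^ 2) * ξ ^ 2 * (r / n) := by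
      gcongr ((r - 1) ^ 2 * (β / α) ^ 2 + ?_) * ξ ^ 2 * ?_
      · exact hoff_count.trans (le_mul_of_one_le_right hr' (one_le_pow₀ hratio))
      · exact hinv i
    _ = r ^ 2 * (r - 1) * (β / α * ξ) ^ 2 / n := by ring

end HasDistinguishableBlocks

theorem normalized_offdiag_perturbation_general {n : ℕ} {κ : Type*} [DecidableEq κ]
    {g : Fin n → κ} {W : Matrix (Fin n) (Fin n) ℝ} {α β ξ r : ℝ} (hα : 0 < α) (hβ : 0 ≤ β)
    (hξ : 0 ≤ ξ) (hr : 1 ≤ r) (hsize : ∀ i, n ≤ r * #(groupOf g i))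
    (hW : HasDistinguishableBlocks g W α β ξ) :
    √(frobSq (normalizedMatrix W - normalizedMatrix (blockPart g W))) ≤
      r * √(r - 1) * (β / α) * ξ := by
  have hr' : 0 ≤ r - 1 := sub_nonneg.2 hr
  refine Real.sqrt_le_iff.2 ⟨by positivity, ?_⟩
  calc frobSq (normalizedMatrix W - normalizedMatrix (blockPart g W))
    _ ≤ ∑ _i : Fin n, r ^ 2 * (r - 1) * (β / α * ξ) ^ 2 / n :=
      sum_le_sum fun i _ => hW.sum_sq_normalizedMatrix_sub_le hα hξ hr hsize i
    _ = n * (r ^ 2 * (r - 1) * (β / α * ξ) ^ 2 / n) := by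
      rw [sum_const, card_univ, Fintype.card_fin, nsmul_eq_mul]
    _ ≤ r ^ 2 * (r - 1) * (β / α * ξ) ^ 2 := by
      rw [mul_div_left_comm]
      exact mul_le_of_le_one_right (by positivity) (div_self_le_one _)
    _ = (r * √(r - 1) * (β / α) * ξ) ^ 2 := by
      simp only [mul_pow, Real.sq_sqrt hr', mul_assoc]

/-- paper's Lemma A.9.  There is an absolute constant `C > 0` such
that: for any `K̄ ≥ 1` dividing `n`, `δ, ξ ∈ [0,1)`, and any symmetric `W ∈ ℝ^{n×n}`
partitioned into blocks by a group assignment `g : Fin n → Fin K̄` with all groups of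
size `n/K̄`, with all in-block entries in `[1/(1+δ), 1+δ]` and all off-block entries
nonnegative and at most `ξ` times every in-block entry, the normalized matrix `Ã` of `W`
and the normalized matrix `Ā` of the block-diagonal part of `W` satisfy
`‖Ã − Ā‖_F ≤ C K̄^{5/2} (1+δ)² ξ`. -/
theorem normalized_offdiag_perturbation :
    ∃ C : ℝ, 0 < C ∧
      ∀ (n Kb : ℕ), 1 ≤ Kb → Kb ∣ n →
      ∀ (δ ξ : ℝ), 0 ≤ δ → δ < 1 → 0 ≤ ξ → ξ < 1 →
      ∀ (g : Fin n → Fin Kb),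
        (∀ k : Fin Kb, (Finset.univ.filter fun i => g i = k).card = n / Kb) →
      ∀ (W : Matrix (Fin n) (Fin n) ℝ), W.IsSymm →
        (∀ i j, g i = g j → 1 / (1 + δ) ≤ W i j ∧ W i j ≤ 1 + δ) →
        (∀ i j, g i ≠ g j → 0 ≤ W i j ∧ ∀ s t, g s = g t → W i j ≤ ξ * W s t) →
        Real.sqrt (frobSq (normalizedMatrix W -
            normalizedMatrix (Matrix.of fun i j => if g i = g j then W i j else 0))) ≤
          C * (Kb : ℝ) ^ ((5 : ℝ) / 2) * (1 + δ) ^ 2 * ξ := by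
  refine ⟨1, one_pos, fun n Kb hKb hdvd δ ξ hδ _ hξ _ g hg W _ hin hoff => ?_⟩
  have hK : (1 : ℝ) ≤ Kb := mod_cast hKb
  have hsize (i) : (n : ℝ) ≤ Kb * #(groupOf g i) := by
    rw [groupOf, hg, ← Nat.cast_mul, Nat.mul_div_cancel' hdvd]
  have hblocks : HasDistinguishableBlocks g W (1 / (1 + δ)) (1 + δ) ξ :=
    ⟨fun i j h => (hin i j h).1, fun i j h => (hin i j h).2,
      fun i j h => (hoff i j h).1, fun i j h => (hoff i j h).2⟩
  calc _ ≤ Kb * √(Kb - 1) * ((1 + δ) / (1 / (1 + δ))) * ξ :=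
        normalized_offdiag_perturbation_general (by positivity) (by positivity) hξ hK hsize
          hblocks
    _ = Kb * √(Kb - 1) * (1 + δ) ^ 2 * ξ := by rw [div_div_eq_mul_div, div_one, sq]
    _ ≤ 1 * (Kb : ℝ) ^ ((5 : ℝ) / 2) * (1 + δ) ^ 2 * ξ := by
        rw [one_mul]
        gcongr
        exact mul_sqrt_sub_one_le_rpow hK
end

section
/- There is an absolute constant C > 0 with the following property. Let K̄ ≥ 1 divide n, let δ, ξ ∈ [0,1), let p satisfy K̄ ≤ p ≤ n, and let W ∈ ℝ^{n×n} be a symmetric matrix partitioned into K̄ × K̄ blocks according to K̄ groups of indices each of size n/K̄, such that every entry of W inside a diagonal block lies in [1/(1+δ), 1+δ], within each diagonal block all same-column entry ratios are at most 1+δ, and every entry outside the diagonal blocks is nonnegative and at most ξ times every entry inside the diagonal blocks. Let Ã be the normalized matrix of W, with eigenvalues λ̃₁ ≥ λ̃₂ ≥ … ≥ λ̃ₙ in decreasing order. Then: (i) 1 − C K̄^{5/2} ξ ≤ λ̃ᵢ ≤ 1 for every i ∈ {1,…,K̄}; and (ii) Σ_{i=K̄+1}^{p} λ̃ᵢ ≤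 C ( sqrt(p K̄ δ) + p K̄^{5/2} ξ ). -/
open Matrix Finset

/-!
Write `d i` for the row sums of `W`, `Ã` for its normalized matrix and `m` for the block size.

The identity `∑ i, d i * y i ^ 2 - y ⬝ᵥ W *ᵥ y = ½ ∑ i, ∑ j, W i j * (y i - y j) ^ 2` shows that no
eigenvalue of `Ã` exceeds `1`. If `y` is constant on blocks, only the off-block entries contribute
to the right-hand side, and they carry at most a fraction `K̄ ξ` of each row sum; so the Rayleigh
quotient of `Ã` is at least `1 - 2 K̄ ξ` on a space of dimension `K̄`, and by Courant–Fischer so are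
the first `K̄` eigenvalues.

Entrywise `Ã` differs from the projection `Π` onto block-constant vectors by at most
`(δ + K̄ ξ) / m` inside the blocks and `ξ / m` outside, whence `‖Ã - Π‖_F ≤ √K̄ (δ + 2 K̄ ξ)`. The
first `p` eigenvalues of `Ã` sum to at most `tr Π + √p ‖Ã - Π‖_F`, where `tr Π = K̄`, and the first
`K̄` of them already account for `K̄ (1 - 2 K̄ ξ)`.
-/

lemma sum_sq_eq_trace_transpose_mul_self {m n R : Type*} [Fintype m] [Fintype n]
    [CommSemiring R] (M : Matrix m n R) : ∑ i, ∑ j, M i j ^ 2 = (Mᵀ * M).trace := by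
  rw [Finset.sum_comm]
  simp only [trace, diag_apply, mul_apply, transpose_apply, sq]

section Orthogonal

variable {ι κ R : Type*} [Fintype ι] [Fintype κ] [CommSemiring R] {U : Matrix ι κ R}
  {A : Matrix ι ι R} {μ : κ → R}

lemma trace_transpose_mul_mul [DecidableEq ι] (hU : U * Uᵀ = 1) (M : Matrix ι ι R) :
    (Uᵀ * M * U).trace = M.trace := by
  rw [trace_mul_cycle, hU, Matrix.one_mul]

lemma sum_sq_transpose_mul_mul [DecidableEq ι] (hU : U * Uᵀ = 1) (M : Matrix ι ι R) :
    ∑ i, ∑ j, (Uᵀ * M * U) i j ^ 2 = ∑ i, ∑ j, M i j ^ 2 := by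
  have conj_gram : (Uᵀ * M * U)ᵀ * (Uᵀ * M * U) = Uᵀ * (Mᵀ * M) * U := by
    calc (Uᵀ * M * U)ᵀ * (Uᵀ * M * U) = Uᵀ * Mᵀ * (U * Uᵀ) * M * U := by
          simp only [transpose_mul, transpose_transpose, Matrix.mul_assoc]
      _ = Uᵀ * (Mᵀ * M) * U := by rw [hU, Matrix.mul_one, Matrix.mul_assoc Uᵀ]
  rw [sum_sq_eq_trace_transpose_mul_self, conj_gram, trace_transpose_mul_mul hU,
    sum_sq_eq_trace_transpose_mul_self]

lemma dotProduct_mulVec_eq_sum_eigenvalues [DecidableEq κ] (hA : A = U * diagonal μ * Uᵀ)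
    (x : ι → R) : x ⬝ᵥ A *ᵥ x = ∑ l, μ l * (Uᵀ *ᵥ x) l ^ 2 := by
  have : x ⬝ᵥ A *ᵥ x = (Uᵀ *ᵥ x) ⬝ᵥ diagonal μ *ᵥ (Uᵀ *ᵥ x) := by
    rw [hA, ← mulVec_mulVec, ← mulVec_mulVec, dotProduct_mulVec, ← mulVec_transpose]
  rw [this]
  simp only [dotProduct, mulVec_diagonal]
  exact Finset.sum_congr rfl fun l _ => by ring

lemma sum_sq_transpose_mulVec [DecidableEq ι] (hU : U * Uᵀ = 1) (x : ι → R) :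
    ∑ l, (Uᵀ *ᵥ x) l ^ 2 = x ⬝ᵥ x :=
  calc ∑ l, (Uᵀ *ᵥ x) l ^ 2 = (Uᵀ *ᵥ x) ⬝ᵥ (Uᵀ *ᵥ x) := by simp only [dotProduct, sq]
    _ = x ⬝ᵥ x := by
      rw [dotProduct_mulVec, vecMul_transpose, mulVec_mulVec, hU, one_mulVec]

end Orthogonal

section SpectralDecomposition

variable {ι : Type*} [Fintype ι] [DecidableEq ι] {U A : Matrix ι ι ℝ} {μ : ι → ℝ}

lemma sum_diag_transpose_mul_mul_le_trace (hU : U * Uᵀ = 1) {M : Matrix ι ι ℝ}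
    (hM : M.PosSemidef) (S : Finset ι) : ∑ l ∈ S, (Uᵀ * M * U) l l ≤ M.trace := by
  have diag_nonneg (l : ι) : 0 ≤ (Uᵀ * M * U) l l := by
    simpa only [conjTranspose_eq_transpose_of_trivial] using
      (hM.conjTranspose_mul_mul_same U).diag_nonneg (i := l)
  rw [← trace_transpose_mul_mul hU M]
  exact Finset.sum_le_sum_of_subset_of_nonneg (Finset.subset_univ S) fun l _ _ => diag_nonneg l

lemma sum_diag_transpose_mul_mul_le_sqrt (hU : U * Uᵀ = 1) (M : Matrix ι ι ℝ) (S : Finset ι) :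
    ∑ l ∈ S, (Uᵀ * M * U) l l ≤ √(#S * ∑ i, ∑ j, M i j ^ 2) := by
  refine Real.le_sqrt_of_sq_le (sq_sum_le_card_mul_sum_sq.trans ?_)
  rw [← sum_sq_transpose_mul_mul hU M]
  gcongr
  calc ∑ l ∈ S, (Uᵀ * M * U) l l ^ 2
      ≤ ∑ l, (Uᵀ * M * U) l l ^ 2 := Finset.sum_le_univ_sum_of_nonneg fun _ => sq_nonneg _
    _ ≤ ∑ i, ∑ j, (Uᵀ * M * U) i j ^ 2 := Finset.sum_le_sum fun i _ =>
        Finset.single_le_sum (f := fun j => (Uᵀ * M * U) i j ^ 2) (fun _ _ => sq_nonneg _)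
          (Finset.mem_univ i)

lemma transpose_mul_mul_eq_diagonal {R : Type*} [CommRing R] {U A : Matrix ι ι R} {μ : ι → R}
    (hU : U * Uᵀ = 1) (hA : A = U * diagonal μ * Uᵀ) :
    Uᵀ * A * U = diagonal μ := by
  have hU' : Uᵀ * U = 1 := mul_eq_one_comm.mp hU
  calc Uᵀ * A * U = Uᵀ * U * diagonal μ * (Uᵀ * U) := by simp only [hA, Matrix.mul_assoc]
    _ = diagonal μ := by rw [hU', Matrix.one_mul, Matrix.mul_one]

lemma sum_eigenvalues_le_trace_add_sqrt (hU : U * Uᵀ = 1) (hA : A = U * diagonal μ * Uᵀ)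
    {T : Matrix ι ι ℝ} (hT : T.PosSemidef) (S : Finset ι) :
    ∑ l ∈ S, μ l ≤ T.trace + √(#S * ∑ i, ∑ j, (A - T) i j ^ 2) := by
  calc ∑ l ∈ S, μ l = ∑ l ∈ S, (Uᵀ * (T + (A - T)) * U) l l := by
        simp only [add_sub_cancel, transpose_mul_mul_eq_diagonal hU hA, diagonal_apply_eq]
    _ = ∑ l ∈ S, (Uᵀ * T * U) l l + ∑ l ∈ S, (Uᵀ * (A - T) * U) l l := by
        simp only [Matrix.mul_add, Matrix.add_mul, Matrix.add_apply, Finset.sum_add_distrib]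
    _ ≤ _ := add_le_add (sum_diag_transpose_mul_mul_le_trace hU hT S)
        (sum_diag_transpose_mul_mul_le_sqrt hU (A - T) S)

lemma eigenvalue_le_of_dotProduct_mulVec_le (hU : U * Uᵀ = 1) (hA : A = U * diagonal μ * Uᵀ)
    {t : ℝ} (ht : ∀ x, x ⬝ᵥ A *ᵥ x ≤ t * (x ⬝ᵥ x)) (l : ι) : μ l ≤ t := by
  have eigenvector : Uᵀ *ᵥ U.col l = Pi.single l 1 := by
    rw [← mulVec_single_one, mulVec_mulVec, mul_eq_one_comm.mp hU, one_mulVec]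
  simpa [dotProduct_mulVec_eq_sum_eigenvalues hA, ← sum_sq_transpose_mulVec hU, eigenvector,
    Pi.single_apply] using ht (U.col l)

end SpectralDecomposition

-- `V` has a nonzero vector orthogonal to the first `i` eigenvectors, whose Rayleigh quotient is
-- at most `μ i`.
lemma le_eigenvalue_of_le_dotProduct_mulVec {n : ℕ} {U A : Matrix (Fin n) (Fin n) ℝ}
    {μ : Fin n → ℝ} (hU : U * Uᵀ = 1) (hA : A = U * diagonal μ * Uᵀ) (hμ : Antitone μ) {i : Fin n}
    {V : Submodule ℝ (Fin n → ℝ)} (hi : (i : ℕ) < Module.finrank ℝ V) {t : ℝ}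
    (ht : ∀ x ∈ V, t * (x ⬝ᵥ x) ≤ x ⬝ᵥ A *ᵥ x) : t ≤ μ i := by
  let leadingCoeffs : V →ₗ[ℝ] (Fin i → ℝ) :=
    LinearMap.funLeft ℝ ℝ (Fin.castLE i.isLt.le) ∘ₗ Uᵀ.mulVecLin ∘ₗ V.subtype
  have ker_ne_bot : LinearMap.ker leadingCoeffs ≠ ⊥ :=
    LinearMap.ker_ne_bot_of_finrank_lt (by simpa using hi)
  obtain ⟨⟨x, hxV⟩, hx, hx0⟩ := Submodule.exists_mem_ne_zero_of_ne_bot ker_ne_bot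
  have coeff_eq_zero (l : Fin n) (hl : l < i) : (Uᵀ *ᵥ x) l = 0 := congrFun hx ⟨l, hl⟩
  have x_pos : 0 < x ⬝ᵥ x := by
    simpa using dotProduct_star_self_pos_iff.mpr fun h => hx0 (Subtype.ext h)
  refine le_of_mul_le_mul_right ((ht x hxV).trans ?_) x_pos
  rw [dotProduct_mulVec_eq_sum_eigenvalues hA, ← sum_sq_transpose_mulVec hU, Finset.mul_sum]
  refine Finset.sum_le_sum fun l _ => ?_
  rcases lt_or_ge l i with hl | hl
  · simp [coeff_eq_zero l hl]
  · exact mul_le_mul_of_nonneg_right (hμ hl) (sq_nonneg _)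

section QuadraticForm

variable {ι : Type*} [Fintype ι]

lemma two_mul_sum_mul_sq_sub_dotProduct_mulVec {R : Type*} [CommRing R] {W : Matrix ι ι R}
    (hW : W.IsSymm) (y : ι → R) :
    2 * (∑ i, (∑ j, W i j) * y i ^ 2 - y ⬝ᵥ W *ᵥ y) = ∑ i, ∑ j, W i j * (y i - y j) ^ 2 := by
  have sum_swap : ∑ i, ∑ j, W i j * y j ^ 2 = ∑ i, ∑ j, W i j * y i ^ 2 := by
    rw [Finset.sum_comm]
    exact Finset.sum_congr rfl fun i _ => Finset.sum_congr rfl fun j _ => by rw [hW.apply]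
  have expand : ∑ i, ∑ j, W i j * (y i - y j) ^ 2 =
      ∑ i, ∑ j, W i j * y i ^ 2 + ∑ i, ∑ j, W i j * y j ^ 2 - 2 * (y ⬝ᵥ W *ᵥ y) := by
    simp only [dotProduct, mulVec, Finset.mul_sum, ← Finset.sum_add_distrib,
      ← Finset.sum_sub_distrib]
    exact Finset.sum_congr rfl fun i _ => Finset.sum_congr rfl fun j _ => by ring
  simp only [expand, sum_swap, Finset.sum_mul]
  ring

lemma sum_mul_sq_sub_comp_le {κ : Type*} [DecidableEq κ] {W : Matrix ι ι ℝ} (hW : W.IsSymm)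
    {g : ι → κ} (hoff : ∀ i j, g i ≠ g j → 0 ≤ W i j) (c : κ → ℝ) :
    ∑ i, ∑ j, W i j * (c (g i) - c (g j)) ^ 2 ≤
      4 * ∑ i, (∑ j with g j ≠ g i, W i j) * c (g i) ^ 2 := by
  let E : Matrix ι ι ℝ := of fun i j => if g j ≠ g i then W i j else 0
  have sum_swap : ∑ i, ∑ j, E i j * c (g j) ^ 2 = ∑ i, ∑ j, E i j * c (g i) ^ 2 := by
    rw [Finset.sum_comm]
    refine Finset.sum_congr rfl fun i _ => Finset.sum_congr rfl fun j _ => ?_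
    simp only [E, of_apply, hW.apply i j, ne_comm]
  have entry_le (i j : ι) : W i j * (c (g i) - c (g j)) ^ 2 ≤
      2 * (E i j * c (g i) ^ 2 + E i j * c (g j) ^ 2) := by
    by_cases hij : g j = g i
    · simp [E, hij]
    · simp only [E, of_apply, ne_eq, hij, not_false_eq_true, if_true]
      nlinarith [mul_nonneg (hoff i j (Ne.symm hij)) (sq_nonneg (c (g i) + c (g j)))]
  calc ∑ i, ∑ j, W i j * (c (g i) - c (g j)) ^ 2
      ≤ ∑ i, ∑ j, 2 * (E i j * c (g i) ^ 2 + E i j * c (g j) ^ 2) :=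
        Finset.sum_le_sum fun i _ => Finset.sum_le_sum fun j _ => entry_le i j
    _ = 4 * ∑ i, ∑ j, E i j * c (g i) ^ 2 := by
        simp only [← Finset.mul_sum, Finset.sum_add_distrib, sum_swap]
        ring
    _ = _ := by simp only [E, of_apply, ← Finset.sum_mul, ← Finset.sum_filter]

end QuadraticForm

section NormalizedMatrix

variable {n : ℕ} {κ : Type*} [DecidableEq κ] {W : Matrix (Fin n) (Fin n) ℝ}

lemma dotProduct_self_sqrt_mul (hd : ∀ i, 0 ≤ ∑ j, W i j) (y : Fin n → ℝ) :
    (fun i => √(∑ j, W i j) * y i) ⬝ᵥ (fun i => √(∑ j, W i j) * y i) =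
      ∑ i, (∑ j, W i j) * y i ^ 2 := by
  refine Finset.sum_congr rfl fun i _ => ?_
  rw [mul_mul_mul_comm, Real.mul_self_sqrt (hd i), sq]

lemma dotProduct_normalizedMatrix_mulVec_sqrt_mul (hd : ∀ i, 0 < ∑ j, W i j) (y : Fin n → ℝ) :
    (fun i => √(∑ j, W i j) * y i) ⬝ᵥ
      normalizedMatrix W *ᵥ (fun i => √(∑ j, W i j) * y i) = y ⬝ᵥ W *ᵥ y := by
  have sqrt_ne_zero (i : Fin n) : √(∑ j, W i j) ≠ 0 := (Real.sqrt_pos.mpr (hd i)).ne'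
  simp only [dotProduct, mulVec, normalizedMatrix, Finset.mul_sum]
  refine Finset.sum_congr rfl fun i _ => Finset.sum_congr rfl fun j _ => ?_
  field_simp [sqrt_ne_zero i, sqrt_ne_zero j]

lemma dotProduct_normalizedMatrix_mulVec_le (hW : W.IsSymm) (hW0 : ∀ i j, 0 ≤ W i j)
    (hd : ∀ i, 0 < ∑ j, W i j) (x : Fin n → ℝ) :
    x ⬝ᵥ normalizedMatrix W *ᵥ x ≤ x ⬝ᵥ x := by
  obtain ⟨y, rfl⟩ : ∃ y : Fin n → ℝ, (fun i => √(∑ j, W i j) * y i) = x :=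
    ⟨fun i => x i / √(∑ j, W i j),
      funext fun i => mul_div_cancel₀ _ (Real.sqrt_pos.mpr (hd i)).ne'⟩
  have energy_nonneg : 0 ≤ ∑ i, ∑ j, W i j * (y i - y j) ^ 2 :=
    Finset.sum_nonneg fun i _ => Finset.sum_nonneg fun j _ => mul_nonneg (hW0 i j) (sq_nonneg _)
  rw [dotProduct_normalizedMatrix_mulVec_sqrt_mul hd, dotProduct_self_sqrt_mul fun i => (hd i).le]
  linarith [two_mul_sum_mul_sq_sub_dotProduct_mulVec hW y]

lemma le_dotProduct_normalizedMatrix_mulVec_comp (hW : W.IsSymm) (hd : ∀ i, 0 < ∑ j, W i j)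
    {g : Fin n → κ} (hoff : ∀ i j, g i ≠ g j → 0 ≤ W i j) {η : ℝ}
    (hη : ∀ i, ∑ j with g j ≠ g i, W i j ≤ η * ∑ j, W i j) (c : κ → ℝ) :
    letI x : Fin n → ℝ := fun i => √(∑ j, W i j) * c (g i)
    (1 - 2 * η) * (x ⬝ᵥ x) ≤ x ⬝ᵥ normalizedMatrix W *ᵥ x := by
  have off_mass_le : ∑ i, (∑ j with g j ≠ g i, W i j) * c (g i) ^ 2 ≤
      η * ∑ i, (∑ j, W i j) * c (g i) ^ 2 := by
    rw [Finset.mul_sum]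
    refine Finset.sum_le_sum fun i _ => ?_
    rw [← mul_assoc]
    exact mul_le_mul_of_nonneg_right (hη i) (sq_nonneg _)
  rw [dotProduct_normalizedMatrix_mulVec_sqrt_mul hd (fun i => c (g i)),
    dotProduct_self_sqrt_mul (fun i => (hd i).le) (fun i => c (g i))]
  linarith [two_mul_sum_mul_sq_sub_dotProduct_mulVec hW (fun i => c (g i)),
    sum_mul_sq_sub_comp_le hW hoff c]

lemma le_eigenvalue_normalizedMatrix [Fintype κ] (hW : W.IsSymm) (hd : ∀ i, 0 < ∑ j, W i j)
    {g : Fin n → κ} (hg : Function.Surjective g) (hoff : ∀ i j, g i ≠ g j → 0 ≤ W i j) {η : ℝ}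
    (hη : ∀ i, ∑ j with g j ≠ g i, W i j ≤ η * ∑ j, W i j) {U : Matrix (Fin n) (Fin n) ℝ}
    {μ : Fin n → ℝ} (hU : U * Uᵀ = 1) (hA : normalizedMatrix W = U * diagonal μ * Uᵀ)
    (hμ : Antitone μ) {i : Fin n} (hi : (i : ℕ) < Fintype.card κ) : 1 - 2 * η ≤ μ i := by
  let blockVec : (κ → ℝ) →ₗ[ℝ] (Fin n → ℝ) :=
    (diagonal fun i => √(∑ j, W i j)).mulVecLin ∘ₗ LinearMap.funLeft ℝ ℝ g
  have blockVec_apply (c : κ → ℝ) : blockVec c = fun i => √(∑ j, W i j) * c (g i) := by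
    ext i
    simp [blockVec, mulVec_diagonal, LinearMap.funLeft_apply]
  have blockVec_injective : Function.Injective blockVec := by
    intro c c' h
    refine LinearMap.funLeft_injective_of_surjective ℝ ℝ g hg (funext fun i => ?_)
    rw [blockVec_apply, blockVec_apply] at h
    exact mul_left_cancel₀ (Real.sqrt_pos.mpr (hd i)).ne' (congrFun h i)
  refine le_eigenvalue_of_le_dotProduct_mulVec hU hA hμ (V := LinearMap.range blockVec) ?_ ?_
  · rwa [LinearMap.finrank_range_of_inj blockVec_injective, Module.finrank_fintype_fun_eq_card]
  · rintro _ ⟨c, rfl⟩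
    rw [blockVec_apply]
    exact le_dotProduct_normalizedMatrix_mulVec_comp hW hd hoff hη c

end NormalizedMatrix

section Blocks

variable {ι κ : Type*} [DecidableEq κ] {g : ι → κ} {m : ℕ}

/-- The orthogonal projection onto the vectors that are constant on the fibres of `g`, when all
fibres have `m` elements. -/
noncomputable def blockProjection (g : ι → κ) (m : ℕ) : Matrix ι ι ℝ :=
  of fun i j => if g i = g j then (m : ℝ)⁻¹ else 0

lemma posSemidef_blockProjection [Finite ι] [Finite κ] : (blockProjection g m).PosSemidef := by
  cases nonempty_fintype κ
  let G : Matrix ι κ ℝ := of fun i k => if g i = k then 1 else 0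
  have eq_smul_gram : blockProjection g m = (m : ℝ)⁻¹ • (G * Gᴴ) := by
    ext i j
    simp [blockProjection, G, mul_apply, eq_comm]
  rw [eq_smul_gram]
  exact (posSemidef_self_mul_conjTranspose G).smul (by positivity)

variable [Fintype ι]

/-- The part of the `i`-th row sum of `W` that comes from the block of `i`. -/
def blockDegree (g : ι → κ) (W : Matrix ι ι ℝ) (i : ι) : ℝ :=
  ∑ j with g j = g i, W i j

lemma card_eq_card_mul_of_card_fiber [Fintype κ] (hg : ∀ k, #{i | g i = k} = m) :
    Fintype.card ι = Fintype.card κ * m := by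
  rw [← Finset.card_univ, Finset.card_eq_sum_card_fiberwise (f := g) (t := Finset.univ) (by simp)]
  simp only [hg, Finset.sum_const, Finset.card_univ, smul_eq_mul]

lemma trace_blockProjection [Fintype κ] (hm : 0 < m) (hg : ∀ k, #{i | g i = k} = m) :
    (blockProjection g m).trace = Fintype.card κ := by
  have hm' : (m : ℝ) ≠ 0 := by positivity
  simp [blockProjection, trace, card_eq_card_mul_of_card_fiber hg, hm']

variable {W : Matrix ι ι ℝ} {i : ι}

lemma blockDegree_le_sum (hW : ∀ j, 0 ≤ W i j) : blockDegree g W i ≤ ∑ j, W i j :=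
  Finset.sum_le_univ_sum_of_nonneg hW

lemma blockDegree_add_sum_ne : blockDegree g W i + ∑ j with g j ≠ g i, W i j = ∑ j, W i j :=
  Finset.sum_filter_add_sum_filter_not _ _ _

lemma blockDegree_le_card_mul (hg : ∀ k, #{i | g i = k} = m) {w : ℝ}
    (hw : ∀ t, g t = g i → W i t ≤ w) : blockDegree g W i ≤ m * w := by
  simpa [blockDegree, hg] using
    Finset.sum_le_card_nsmul {t | g t = g i} (W i) w (by simpa using hw)

lemma card_mul_le_mul_blockDegree (hg : ∀ k, #{i | g i = k} = m) {c w : ℝ}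
    (hw : ∀ t, g t = g i → w ≤ c * W i t) : m * w ≤ c * blockDegree g W i := by
  rw [blockDegree, Finset.mul_sum]
  simpa [hg] using
    Finset.card_nsmul_le_sum {t | g t = g i} (fun t => c * W i t) w (by simpa using hw)

lemma sum_ne_le_mul_blockDegree [Fintype κ] (hm : 0 < m) (hg : ∀ k, #{i | g i = k} = m) {ξ : ℝ}
    (hξ : 0 ≤ ξ * blockDegree g W i)
    (hoff : ∀ j t, g i ≠ g j → g t = g i → W i j ≤ ξ * W i t) :
    ∑ j with g j ≠ g i, W i j ≤ Fintype.card κ * ξ * blockDegree g W i := by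
  have hm' : (0 : ℝ) < m := by positivity
  refine le_of_mul_le_mul_left ?_ hm'
  calc m * ∑ j with g j ≠ g i, W i j
      ≤ ∑ j with g j ≠ g i, ξ * blockDegree g W i := by
        rw [Finset.mul_sum]
        refine Finset.sum_le_sum fun j hj => card_mul_le_mul_blockDegree hg fun t => hoff j t ?_
        simpa [eq_comm] using hj
    _ ≤ ∑ _j : ι, ξ * blockDegree g W i := Finset.sum_le_univ_sum_of_nonneg fun _ => hξ
    _ = m * (Fintype.card κ * ξ * blockDegree g W i) := by
        rw [Finset.sum_const, Finset.card_univ, card_eq_card_mul_of_card_fiber hg, nsmul_eq_mul]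
        push_cast
        ring

lemma sum_sq_sub_blockProjection_le [Fintype κ] (hm : 0 < m) (hg : ∀ k, #{i | g i = k} = m)
    {A : Matrix ι ι ℝ} {α β : ℝ} (hin : ∀ i j, g i = g j → |A i j - (m : ℝ)⁻¹| ≤ α / m)
    (hoff : ∀ i j, g i ≠ g j → |A i j| ≤ β / m) :
    ∑ i, ∑ j, (A - blockProjection g m) i j ^ 2 ≤
      Fintype.card κ * α ^ 2 + (Fintype.card κ * β) ^ 2 := by
  have entry_le (i j : ι) : (A - blockProjection g m) i j ^ 2 ≤
      (if g j = g i then (α / m) ^ 2 else 0) + (β / m) ^ 2 := by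
    by_cases hij : g i = g j
    · have := sq_le_sq' (neg_le_of_abs_le (hin i j hij)) (le_of_abs_le (hin i j hij))
      simpa [blockProjection, hij] using le_add_of_le_of_nonneg this (sq_nonneg (β / m))
    · have := sq_le_sq' (neg_le_of_abs_le (hoff i j hij)) (le_of_abs_le (hoff i j hij))
      simpa [blockProjection, hij, Ne.symm hij] using this
  calc ∑ i, ∑ j, (A - blockProjection g m) i j ^ 2
      ≤ ∑ i, ∑ j, ((if g j = g i then (α / m) ^ 2 else 0) + (β / m) ^ 2) :=
        Finset.sum_le_sum fun i _ => Finset.sum_le_sum fun j _ => entry_le i j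
    _ = Fintype.card κ * m * (m * (α / m) ^ 2 + Fintype.card κ * m * (β / m) ^ 2) := by
        simp only [Finset.sum_add_distrib, ← Finset.sum_filter, Finset.sum_const, hg,
          Finset.card_univ, card_eq_card_mul_of_card_fiber hg, nsmul_eq_mul, Nat.cast_mul]
        ring
    _ = Fintype.card κ * α ^ 2 + (Fintype.card κ * β) ^ 2 := by
        field_simp

end Blocks

lemma le_mul_sqrt_mul_sqrt {c w x y : ℝ} (hc : 0 ≤ c) (hw : 0 ≤ w) (hx : w ≤ c * x)
    (hy : w ≤ c * y) : w ≤ c * (√x * √y) :=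
  calc w = √w * √w := (Real.mul_self_sqrt hw).symm
    _ ≤ √(c * x) * √(c * y) := by gcongr
    _ = c * (√x * √y) := by
      rw [Real.sqrt_mul hc, Real.sqrt_mul hc, mul_mul_mul_comm, Real.mul_self_sqrt hc]

lemma sqrt_mul_sqrt_le {w x y : ℝ} (hw : 0 ≤ w) (hx : x ≤ w) (hy : y ≤ w) : √x * √y ≤ w :=
  calc √x * √y ≤ √w * √w := by gcongr
    _ = w := Real.mul_self_sqrt hw

lemma abs_sub_le_add_mul {w s δ η : ℝ} (hδ : 0 ≤ δ) (hη : 0 ≤ η) (hs : 0 ≤ s)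
    (hws : w ≤ (1 + δ) * s) (hsw : s ≤ (1 + η) * (1 + δ) * w) : |w - s| ≤ (δ + η) * s := by
  have one_sub_mul_le : (1 - δ - η) * ((1 + η) * (1 + δ)) ≤ 1 := by
    nlinarith [mul_nonneg hδ hη, mul_nonneg (mul_nonneg hδ hη) (add_nonneg hδ hη)]
  have le_w : (1 - δ - η) * s ≤ w := by
    refine le_of_mul_le_mul_left ?_ (show 0 < (1 + η) * (1 + δ) by positivity)
    linarith [mul_le_mul_of_nonneg_right one_sub_mul_le hs]
  rw [abs_sub_le_iff]
  constructor <;> linarith [mul_nonneg hη hs]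

section NormalizedEntries

variable {n m : ℕ} {W : Matrix (Fin n) (Fin n) ℝ} {i j : Fin n}

lemma abs_normalizedMatrix_sub_inv_le {δ η : ℝ} (hm : 0 < m) (hδ : 0 ≤ δ) (hη : 0 ≤ η)
    (hW : 0 < W i j) (hdi : 0 < ∑ k, W i k) (hdj : 0 < ∑ k, W j k)
    (hi_le : m * W i j ≤ (1 + δ) * ∑ k, W i k) (hj_le : m * W i j ≤ (1 + δ) * ∑ k, W j k)
    (hle_i : ∑ k, W i k ≤ (1 + η) * (1 + δ) * (m * W i j))
    (hle_j : ∑ k, W j k ≤ (1 + η) * (1 + δ) * (m * W i j)) :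
    |normalizedMatrix W i j - (m : ℝ)⁻¹| ≤ (δ + η) / m := by
  set s := √(∑ k, W i k) * √(∑ k, W j k) with hs
  have s_pos : 0 < s := mul_pos (Real.sqrt_pos.mpr hdi) (Real.sqrt_pos.mpr hdj)
  have hm' : (0 : ℝ) < m := by positivity
  have mul_W_near : |m * W i j - s| ≤ (δ + η) * s :=
    abs_sub_le_add_mul hδ hη s_pos.le
      (le_mul_sqrt_mul_sqrt (by positivity) (by positivity) hi_le hj_le)
      (sqrt_mul_sqrt_le (by positivity) hle_i hle_j)
  have sub_eq_div : normalizedMatrix W i j - (m : ℝ)⁻¹ = (m * W i j - s) / (m * s) := by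
    rw [normalizedMatrix, ← hs]
    field_simp
  rw [sub_eq_div, abs_div, abs_of_pos (mul_pos hm' s_pos), div_le_div_iff₀ (by positivity) hm']
  nlinarith

lemma abs_normalizedMatrix_le {ξ : ℝ} (hm : 0 < m) (hξ : 0 ≤ ξ) (hW : 0 ≤ W i j)
    (hdi : 0 < ∑ k, W i k) (hdj : 0 < ∑ k, W j k) (hi_le : m * W i j ≤ ξ * ∑ k, W i k)
    (hj_le : m * W i j ≤ ξ * ∑ k, W j k) : |normalizedMatrix W i j| ≤ ξ / m := by
  have s_pos : 0 < √(∑ k, W i k) * √(∑ k, W j k) :=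
    mul_pos (Real.sqrt_pos.mpr hdi) (Real.sqrt_pos.mpr hdj)
  have hm' : (0 : ℝ) < m := by positivity
  rw [normalizedMatrix, abs_of_nonneg (div_nonneg hW s_pos.le), div_le_div_iff₀ s_pos hm', mul_comm]
  exact le_mul_sqrt_mul_sqrt hξ (by positivity) hi_le hj_le

end NormalizedEntries

lemma sum_filter_le_sum_filter_lt_sub {n K p : ℕ} (hKp : K ≤ p) (hKn : K ≤ n) {μ : Fin n → ℝ}
    {t : ℝ} (ht : ∀ i : Fin n, (i : ℕ) < K → t ≤ μ i) :
    ∑ i ∈ univ.filter (fun i : Fin n => K ≤ (i : ℕ) ∧ (i : ℕ) < p), μ i ≤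
      ∑ i ∈ univ.filter (fun i : Fin n => (i : ℕ) < p), μ i - K * t := by
  have split := Finset.sum_filter_add_sum_filter_not
    (univ.filter fun i : Fin n => (i : ℕ) < p) (fun i => (i : ℕ) < K) μ
  have filter_lt : (univ.filter fun i : Fin n => (i : ℕ) < p).filter
      (fun i : Fin n => (i : ℕ) < K) = univ.filter fun i : Fin n => (i : ℕ) < K := by
    ext i
    simp only [mem_filter, mem_univ, true_and, and_iff_right_iff_imp]
    exact fun hi => hi.trans_le hKp
  have filter_not_lt : (univ.filter fun i : Fin n => (i : ℕ) < p).filter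
      (fun i : Fin n => ¬(i : ℕ) < K) = univ.filter fun i : Fin n => K ≤ (i : ℕ) ∧ (i : ℕ) < p := by
    simp only [filter_filter, not_lt, and_comm]
  have head : K * t ≤ ∑ i ∈ univ.filter (fun i : Fin n => (i : ℕ) < K), μ i := by
    simpa [Fin.card_filter_val_lt, min_eq_right hKn] using
      Finset.card_nsmul_le_sum (univ.filter fun i : Fin n => (i : ℕ) < K) μ t (by simpa using ht)
  rw [filter_lt, filter_not_lt] at split
  linarith

/-- The hypotheses on the weight matrix, relative to the partition of the indices into the fibres
of `g`: in-block entries are positive and vary by a factor of at most `1 + δ` along a row, and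
off-block entries are nonnegative and at most `ξ` times each in-block entry of the same row. -/
structure IsBlockWeight {ι κ : Type*} (g : ι → κ) (δ ξ : ℝ) (W : Matrix ι ι ℝ) : Prop where
  isSymm : W.IsSymm
  pos : ∀ i j, g i = g j → 0 < W i j
  le_one_add_mul : ∀ i j k, g i = g j → g i = g k → W i j ≤ (1 + δ) * W i k
  off_nonneg : ∀ i j, g i ≠ g j → 0 ≤ W i j
  off_le_mul : ∀ i j k, g i ≠ g j → g i = g k → W i j ≤ ξ * W i k

namespace IsBlockWeight

section Degrees

variable {ι κ : Type*} {g : ι → κ} {m : ℕ} {δ ξ : ℝ} {W : Matrix ι ι ℝ}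

lemma of_div_le (hW : W.IsSymm) (hpos : ∀ i j, g i = g j → 0 < W i j)
    (hratio : ∀ s t j, g s = g j → g t = g j → W s j / W t j ≤ 1 + δ)
    (hoff : ∀ i j, g i ≠ g j → 0 ≤ W i j ∧ ∀ s t, g s = g t → W i j ≤ ξ * W s t) :
    IsBlockWeight g δ ξ W where
  isSymm := hW
  pos := hpos
  le_one_add_mul i j k hij hik := by
    rw [← hW.apply i j, ← hW.apply i k, ← div_le_iff₀ (hpos k i hik.symm)]
    exact hratio j k i hij.symm hik.symm
  off_nonneg i j hij := (hoff i j hij).1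
  off_le_mul i j k hij hik := (hoff i j hij).2 i k hik

lemma nonneg (h : IsBlockWeight g δ ξ W) (i j : ι) : 0 ≤ W i j := by
  by_cases hij : g i = g j
  · exact (h.pos i j hij).le
  · exact h.off_nonneg i j hij

variable [Fintype ι]

lemma sum_pos (h : IsBlockWeight g δ ξ W) (i : ι) : 0 < ∑ j, W i j :=
  Finset.sum_pos' (fun j _ => h.nonneg i j) ⟨i, Finset.mem_univ i, h.pos i i rfl⟩

variable [DecidableEq κ]

lemma blockDegree_pos (h : IsBlockWeight g δ ξ W) (i : ι) : 0 < blockDegree g W i :=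
  Finset.sum_pos (fun j hj => h.pos i j (Finset.mem_filter.mp hj).2.symm) ⟨i, by simp⟩

lemma card_mul_le_mul_sum (h : IsBlockWeight g δ ξ W) (hg : ∀ k, #{i | g i = k} = m)
    {i : ι} {c w : ℝ} (hc : 0 ≤ c) (hw : ∀ t, g i = g t → w ≤ c * W i t) :
    m * w ≤ c * ∑ t, W i t :=
  (card_mul_le_mul_blockDegree hg fun t ht => hw t ht.symm).trans
    (mul_le_mul_of_nonneg_left (blockDegree_le_sum (h.nonneg i)) hc)

variable [Fintype κ]

lemma sum_ne_le_mul_blockDegree (h : IsBlockWeight g δ ξ W) (hm : 0 < m)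
    (hg : ∀ k, #{i | g i = k} = m) (hξ : 0 ≤ ξ) (i : ι) :
    ∑ j with g j ≠ g i, W i j ≤ Fintype.card κ * ξ * blockDegree g W i :=
  _root_.sum_ne_le_mul_blockDegree hm hg (mul_nonneg hξ (h.blockDegree_pos i).le)
    fun j t hij ht => h.off_le_mul i j t hij ht.symm

lemma sum_ne_le_mul_sum (h : IsBlockWeight g δ ξ W) (hm : 0 < m)
    (hg : ∀ k, #{i | g i = k} = m) (hξ : 0 ≤ ξ) (i : ι) :
    ∑ j with g j ≠ g i, W i j ≤ Fintype.card κ * ξ * ∑ j, W i j :=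
  (h.sum_ne_le_mul_blockDegree hm hg hξ i).trans
    (mul_le_mul_of_nonneg_left (blockDegree_le_sum (h.nonneg i)) (by positivity))

lemma sum_le_mul_card_mul (h : IsBlockWeight g δ ξ W) (hm : 0 < m)
    (hg : ∀ k, #{i | g i = k} = m) (hξ : 0 ≤ ξ) {i j : ι} (hij : g i = g j) :
    ∑ t, W i t ≤ (1 + Fintype.card κ * ξ) * (1 + δ) * (m * W i j) := by
  have blockDegree_le : blockDegree g W i ≤ m * ((1 + δ) * W i j) :=
    blockDegree_le_card_mul hg fun t ht => h.le_one_add_mul i t j ht.symm hij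
  calc ∑ t, W i t ≤ (1 + Fintype.card κ * ξ) * blockDegree g W i := by
        linarith [blockDegree_add_sum_ne (g := g) (W := W) (i := i),
          h.sum_ne_le_mul_blockDegree hm hg hξ i]
    _ ≤ (1 + Fintype.card κ * ξ) * (m * ((1 + δ) * W i j)) := by gcongr
    _ = _ := by ring

end Degrees

variable {n m : ℕ} {κ : Type*} {g : Fin n → κ} {δ ξ : ℝ}
  {W U : Matrix (Fin n) (Fin n) ℝ} {μ : Fin n → ℝ}

lemma eigenvalue_le_one (h : IsBlockWeight g δ ξ W) (hU : U * Uᵀ = 1)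
    (hA : normalizedMatrix W = U * diagonal μ * Uᵀ) (i : Fin n) : μ i ≤ 1 :=
  eigenvalue_le_of_dotProduct_mulVec_le hU hA (fun x => by
    simpa only [one_mul] using
      dotProduct_normalizedMatrix_mulVec_le h.isSymm h.nonneg h.sum_pos x) i

variable [DecidableEq κ]

lemma abs_normalizedMatrix_le (h : IsBlockWeight g δ ξ W) (hm : 0 < m)
    (hg : ∀ k, #{i | g i = k} = m) (hξ : 0 ≤ ξ) {i j : Fin n} (hij : g i ≠ g j) :
    |normalizedMatrix W i j| ≤ ξ / m := by
  refine _root_.abs_normalizedMatrix_le hm hξ (h.nonneg i j) (h.sum_pos i) (h.sum_pos j) ?_ ?_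
  · exact h.card_mul_le_mul_sum hg hξ fun t => h.off_le_mul i j t hij
  · rw [← h.isSymm.apply]
    exact h.card_mul_le_mul_sum hg hξ fun t => h.off_le_mul j i t hij.symm

variable [Fintype κ]

lemma abs_normalizedMatrix_sub_inv_le (h : IsBlockWeight g δ ξ W) (hm : 0 < m)
    (hg : ∀ k, #{i | g i = k} = m) (hδ : 0 ≤ δ) (hξ : 0 ≤ ξ) {i j : Fin n} (hij : g i = g j) :
    |normalizedMatrix W i j - (m : ℝ)⁻¹| ≤ (δ + Fintype.card κ * ξ) / m := by
  have hδ' : 0 ≤ 1 + δ := by positivity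
  refine _root_.abs_normalizedMatrix_sub_inv_le hm hδ (by positivity) (h.pos i j hij)
    (h.sum_pos i) (h.sum_pos j) ?_ ?_ (h.sum_le_mul_card_mul hm hg hξ hij) ?_
  · exact h.card_mul_le_mul_sum hg hδ' fun t => h.le_one_add_mul i j t hij
  · rw [← h.isSymm.apply]
    exact h.card_mul_le_mul_sum hg hδ' fun t => h.le_one_add_mul j i t hij.symm
  · rw [← h.isSymm.apply i j]
    exact h.sum_le_mul_card_mul hm hg hξ hij.symm

lemma sum_sq_normalizedMatrix_sub_blockProjection_le (h : IsBlockWeight g δ ξ W) (hm : 0 < m)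
    (hg : ∀ k, #{i | g i = k} = m) (hδ : 0 ≤ δ) (hξ : 0 ≤ ξ) :
    ∑ i, ∑ j, (normalizedMatrix W - blockProjection g m) i j ^ 2 ≤
      Fintype.card κ * (δ + 2 * Fintype.card κ * ξ) ^ 2 := by
  refine (sum_sq_sub_blockProjection_le hm hg
    (fun i j => h.abs_normalizedMatrix_sub_inv_le hm hg hδ hξ)
    (fun i j => h.abs_normalizedMatrix_le hm hg hξ)).trans ?_
  rcases Nat.eq_zero_or_pos (Fintype.card κ) with hK | hK
  · simp [hK]
  have one_le_card : (1 : ℝ) ≤ Fintype.card κ := by exact_mod_cast hK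
  have hη : 0 ≤ Fintype.card κ * ξ := by positivity
  have sq_le : (Fintype.card κ * ξ) ^ 2 ≤ Fintype.card κ * (Fintype.card κ * ξ) ^ 2 :=
    le_mul_of_one_le_left (sq_nonneg _) one_le_card
  have sq_add_sq_le : (δ + Fintype.card κ * ξ) ^ 2 + (Fintype.card κ * ξ) ^ 2 ≤
      (δ + 2 * Fintype.card κ * ξ) ^ 2 := by
    nlinarith [mul_nonneg hδ hη]
  calc Fintype.card κ * (δ + Fintype.card κ * ξ) ^ 2 + (Fintype.card κ * ξ) ^ 2
      ≤ Fintype.card κ * ((δ + Fintype.card κ * ξ) ^ 2 + (Fintype.card κ * ξ) ^ 2) := by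
        linarith
    _ ≤ _ := by gcongr

lemma one_sub_le_eigenvalue (h : IsBlockWeight g δ ξ W) (hm : 0 < m)
    (hg : ∀ k, #{i | g i = k} = m) (hξ : 0 ≤ ξ) (hU : U * Uᵀ = 1)
    (hA : normalizedMatrix W = U * diagonal μ * Uᵀ) (hμ : Antitone μ) {i : Fin n}
    (hi : (i : ℕ) < Fintype.card κ) : 1 - 2 * (Fintype.card κ * ξ) ≤ μ i := by
  have g_surjective : Function.Surjective g := fun k => by
    obtain ⟨i, hi⟩ := Finset.card_pos.mp (hm.trans_eq (hg k).symm)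
    exact ⟨i, (Finset.mem_filter.mp hi).2⟩
  exact le_eigenvalue_normalizedMatrix h.isSymm h.sum_pos g_surjective h.off_nonneg
    (h.sum_ne_le_mul_sum hm hg hξ) hU hA hμ hi

lemma sum_eigenvalues_lt_le (h : IsBlockWeight g δ ξ W) (hm : 0 < m)
    (hg : ∀ k, #{i | g i = k} = m) (hδ : 0 ≤ δ) (hξ : 0 ≤ ξ) (hU : U * Uᵀ = 1)
    (hA : normalizedMatrix W = U * diagonal μ * Uᵀ) (p : ℕ) :
    ∑ i ∈ univ.filter (fun i : Fin n => (i : ℕ) < p), μ i ≤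
      Fintype.card κ + √(p * Fintype.card κ) * (δ + 2 * Fintype.card κ * ξ) := by
  have card_le : (#(univ.filter fun i : Fin n => (i : ℕ) < p) : ℝ) ≤ p := by
    rw [Fin.card_filter_val_lt]
    exact_mod_cast min_le_right n p
  calc ∑ i ∈ univ.filter (fun i : Fin n => (i : ℕ) < p), μ i
      ≤ Fintype.card κ + √(#(univ.filter fun i : Fin n => (i : ℕ) < p) *
          ∑ i, ∑ j, (normalizedMatrix W - blockProjection g m) i j ^ 2) := by
        rw [← trace_blockProjection hm hg]
        exact sum_eigenvalues_le_trace_add_sqrt hU hA posSemidef_blockProjection _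
    _ ≤ Fintype.card κ +
          √(p * (Fintype.card κ * (δ + 2 * Fintype.card κ * ξ) ^ 2)) := by
        gcongr
        exact h.sum_sq_normalizedMatrix_sub_blockProjection_le hm hg hδ hξ
    _ = _ := by rw [← mul_assoc, Real.sqrt_mul (by positivity), Real.sqrt_sq (by positivity)]

end IsBlockWeight

lemma sqrt_mul_le_sqrt_mul {x δ : ℝ} (hx : 0 ≤ x) (hδ : 0 ≤ δ) (hδ1 : δ ≤ 1) :
    √x * δ ≤ √(x * δ) := by
  rw [Real.sqrt_mul hx]
  exact mul_le_mul_of_nonneg_left (Real.le_sqrt_of_sq_le (pow_le_of_le_one hδ hδ1 two_ne_zero))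
    (Real.sqrt_nonneg x)

theorem perturbed_eigenvalue_bounds_general {n p m : ℕ} {κ : Type*} [Fintype κ] [DecidableEq κ]
    (hp : Fintype.card κ ≤ p) (hm : 0 < m) {g : Fin n → κ} (hg : ∀ k, #{i | g i = k} = m)
    {δ ξ : ℝ} (hδ : 0 ≤ δ) (hξ : 0 ≤ ξ) {W : Matrix (Fin n) (Fin n) ℝ}
    (h : IsBlockWeight g δ ξ W) {μ : Fin n → ℝ} (hμ : Antitone μ)
    {U : Matrix (Fin n) (Fin n) ℝ} (hU : U * Uᵀ = 1)
    (hA : normalizedMatrix W = U * diagonal μ * Uᵀ) :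
    (∀ i : Fin n, (i : ℕ) < Fintype.card κ → 1 - 2 * (Fintype.card κ * ξ) ≤ μ i ∧ μ i ≤ 1) ∧
      ∑ i ∈ univ.filter (fun i : Fin n => Fintype.card κ ≤ (i : ℕ) ∧ (i : ℕ) < p), μ i ≤
        √(p * Fintype.card κ) * δ + 4 * (p * Fintype.card κ * ξ) := by
  set K := Fintype.card κ
  have head_ge (i : Fin n) (hi : (i : ℕ) < K) : 1 - 2 * (K * ξ) ≤ μ i :=
    h.one_sub_le_eigenvalue hm hg hξ hU hA hμ hi
  refine ⟨fun i hi => ⟨head_ge i hi, h.eigenvalue_le_one hU hA i⟩, ?_⟩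
  have K_le_n : K ≤ n := by
    rw [← Fintype.card_fin n, card_eq_card_mul_of_card_fiber hg]
    exact Nat.le_mul_of_pos_right K hm
  have hp' : (K : ℝ) ≤ p := by exact_mod_cast hp
  have sqrt_le : √(p * K) ≤ p := by
    calc √(p * K) ≤ √(p * p) := by gcongr
      _ = p := Real.sqrt_mul_self (by positivity)
  calc ∑ i ∈ univ.filter (fun i : Fin n => K ≤ (i : ℕ) ∧ (i : ℕ) < p), μ i
      ≤ K + √(p * K) * (δ + 2 * K * ξ) - K * (1 - 2 * (K * ξ)) :=
        (sum_filter_le_sum_filter_lt_sub hp K_le_n head_ge).trans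
          (sub_le_sub_right (h.sum_eigenvalues_lt_le hm hg hδ hξ hU hA p) _)
    _ = √(p * K) * δ + 2 * (√(p * K) * (K * ξ)) + 2 * (K * (K * ξ)) := by ring
    _ ≤ √(p * K) * δ + 2 * (p * (K * ξ)) + 2 * (p * (K * ξ)) := by gcongr
    _ = _ := by ring

/-- paper's Lemma A.10.  There is an absolute constant `C > 0` such
that for any `K̄ ≥ 1` dividing `n`, any `K̄ ≤ p ≤ n`, `δ, ξ ∈ [0,1)`, and any symmetric
`W` partitioned into balanced blocks by `g : Fin n → Fin K̄` with in-block entries in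
`[1/(1+δ), 1+δ]`, in-block same-column entry ratios at most `1+δ`, and off-block entries
nonnegative and at most `ξ` times every in-block entry, the eigenvalues
`λ̃₁ ≥ … ≥ λ̃ₙ` of the normalized matrix `Ã` of `W` (an antitone listing coming from a
spectral decomposition) satisfy
(i) `1 − C K̄^{5/2} ξ ≤ λ̃ᵢ ≤ 1` for `i ∈ {1, …, K̄}` and
(ii) `Σ_{i=K̄+1}^{p} λ̃ᵢ ≤ C (sqrt(p K̄ δ) + p K̄^{5/2} ξ)`. -/
theorem perturbed_eigenvalue_bounds :
    ∃ C : ℝ, 0 < C ∧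
      ∀ (n Kb p : ℕ), 1 ≤ Kb → Kb ∣ n → Kb ≤ p → p ≤ n →
      ∀ (δ ξ : ℝ), 0 ≤ δ → δ < 1 → 0 ≤ ξ → ξ < 1 →
      ∀ (g : Fin n → Fin Kb),
        (∀ k : Fin Kb, (Finset.univ.filter fun i => g i = k).card = n / Kb) →
      ∀ (W : Matrix (Fin n) (Fin n) ℝ), W.IsSymm →
        (∀ i j, g i = g j → 1 / (1 + δ) ≤ W i j ∧ W i j ≤ 1 + δ) →
        (∀ s t j, g s = g j → g t = g j → W s j / W t j ≤ 1 + δ) →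
        (∀ i j, g i ≠ g j → 0 ≤ W i j ∧ ∀ s t, g s = g t → W i j ≤ ξ * W s t) →
      ∀ (μ : Fin n → ℝ), Antitone μ →
      ∀ (U : Matrix (Fin n) (Fin n) ℝ), U * Uᵀ = 1 →
        normalizedMatrix W = U * Matrix.diagonal μ * Uᵀ →
        ((∀ i : Fin n, (i : ℕ) < Kb →
            1 - C * (Kb : ℝ) ^ ((5 : ℝ) / 2) * ξ ≤ μ i ∧ μ i ≤ 1) ∧
          ∑ i ∈ Finset.univ.filter (fun i : Fin n => Kb ≤ (i : ℕ) ∧ (i : ℕ) < p), μ i ≤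
            C * (Real.sqrt ((p : ℝ) * Kb * δ) +
              (p : ℝ) * (Kb : ℝ) ^ ((5 : ℝ) / 2) * ξ)) := by
  refine ⟨4, by norm_num, fun n Kb p hK _ hKp hpn δ ξ hδ hδ1 hξ _ g hg W hW hin hratio hoff μ hμ
    U hU hA => ?_⟩
  have in_pos (i j : Fin n) (hij : g i = g j) : 0 < W i j :=
    (by positivity : 0 < 1 / (1 + δ)).trans_le (hin i j hij).1
  obtain ⟨head, tail⟩ := perturbed_eigenvalue_bounds_general (p := p)
    ((Fintype.card_fin Kb).trans_le hKp) (Nat.div_pos (hKp.trans hpn) hK) hg hδ hξ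
    (.of_div_le hW in_pos hratio hoff) hμ hU hA
  rw [Fintype.card_fin] at head tail
  have le_rpow : (Kb : ℝ) ≤ (Kb : ℝ) ^ ((5 : ℝ) / 2) :=
    Real.self_le_rpow_of_one_le (by exact_mod_cast hK) (by norm_num)
  refine ⟨fun i hi => ⟨(head i hi).1.trans' ?_, (head i hi).2⟩, tail.trans ?_⟩
  · nlinarith [mul_le_mul_of_nonneg_right le_rpow hξ, mul_nonneg (Nat.cast_nonneg Kb) hξ]
  · have mul_le : p * Kb * ξ ≤ p * (Kb : ℝ) ^ ((5 : ℝ) / 2) * ξ := by gcongr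
    linarith [sqrt_mul_le_sqrt_mul (x := p * Kb) (by positivity) hδ hδ1.le,
      Real.sqrt_nonneg ((p : ℝ) * Kb * δ)]
end
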